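/- arXiv:1310.0838 — 2 statements merged into one kernel-verified Lean document; each statement's English description precedes it below -/
import Mathlib

section
/- (Stanley's reciprocity for graph colorings) Let Γ be a finite simple graph and χ_Γ its chromatic polynomial. Then for all integers n ≥ 1, |χ_Γ(-n)| equals the number of weakly compatible pairs (c,σ) consisting of an n-coloring c and an acyclic orientation σ of Γ. In particular, |χ_Γ(-1)| equals the number of acyclic orientations of Γ. -/
/-- An orientation of a simple graph `Γ`: an assignment of a head vertex to every edge,
which is a vertex of that edge. -/
def GraphOri {V : Type*} (Γ : SimpleGraph V) : Type _ :=
  {σ : Γ.edgeSet → V // ∀ e : Γ.edgeSet, σ e ∈ (e : Sym2 V)}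

/-- The directed adjacency relation induced by an orientation: `u → v` iff `uv` is an
edge with head `v`. -/
def dirAdj {V : Type*} (Γ : SimpleGraph V) (σ : GraphOri Γ) (u v : V) : Prop :=
  ∃ h : Γ.Adj u v, σ.1 ⟨s(u, v), Γ.mem_edgeSet.mpr h⟩ = v

/-- An orientation is acyclic if it has no directed cycles, i.e. no vertex admits a
nonempty directed path back to itself. -/
def oriAcyclic {V : Type*} (Γ : SimpleGraph V) (σ : GraphOri Γ) : Prop :=
  ∀ v : V, ¬ Relation.TransGen (dirAdj Γ σ) v v

/-- `oriSMulEq Γ hact g σ σ'` says that `σ' = g • σ`, where `(g • σ)(uv) = g • σ(g⁻¹ • uv)`.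
In particular `oriSMulEq Γ hact g σ σ` says that `σ` is fixed by `g`. -/
def oriSMulEq {V G : Type*} [Group G] [MulAction G V] (Γ : SimpleGraph V)
    (hact : ∀ (g : G) (u v : V), Γ.Adj u v → Γ.Adj (g • u) (g • v))
    (g : G) (σ σ' : GraphOri Γ) : Prop :=
  ∀ (u v : V) (h : Γ.Adj u v),
    σ'.1 ⟨s(u, v), Γ.mem_edgeSet.mpr h⟩ =
      g • σ.1 ⟨s(g⁻¹ • u, g⁻¹ • v), Γ.mem_edgeSet.mpr (hact g⁻¹ u v h)⟩

/-- A coloring `c` and an orientation `σ` are weakly compatible if every edge `uv` with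
`c(u) < c(v)` is oriented towards `v`. -/
def weakCompat {V : Type*} (Γ : SimpleGraph V) {n : ℕ} (c : V → Fin n)
    (σ : GraphOri Γ) : Prop :=
  ∀ (u v : V) (h : Γ.Adj u v), c u < c v → σ.1 ⟨s(u, v), Γ.mem_edgeSet.mpr h⟩ = v

/- quotient poset relation for Γ^σ_g -/
def quotDirRel {V G : Type*} [Group G] [MulAction G V] (Γ : SimpleGraph V)
    (g : G) (σ : GraphOri Γ)
    (a b : Quotient (MulAction.orbitRel (Subgroup.zpowers g) V)) : Prop :=
  ∃ u v : V, Quotient.mk (MulAction.orbitRel (Subgroup.zpowers g) V) u = a ∧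
    Quotient.mk (MulAction.orbitRel (Subgroup.zpowers g) V) v = b ∧
    Relation.TransGen (dirAdj Γ σ) u v

/-- Partial proper colorings with support `S` and colors `1, …, n` on `S`. -/
def IsX {V : Type*} (Γ : SimpleGraph V) (n : ℕ) (S : Finset V) (c : V → ℕ) : Prop :=
  (∀ u, c u ≤ n) ∧ (∀ u, c u = 0 ↔ u ∉ S) ∧ ∀ u v, Γ.Adj u v → u ∈ S → v ∈ S → c u ≠ c v

/-- Partial weakly compatible pairs with support `S`. -/
def IsW {V : Type*} (Γ : SimpleGraph V) (n : ℕ) (S : Finset V)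
    (x : (V → ℕ) × (V → V → Prop)) : Prop :=
  (∀ u, x.1 u ≤ n) ∧ (∀ u, x.1 u = 0 ↔ u ∉ S) ∧
  (∀ u v, x.2 u v → Γ.Adj u v ∧ u ∈ S ∧ v ∈ S ∧ x.1 u ≤ x.1 v) ∧
  (∀ u v, Γ.Adj u v → u ∈ S → v ∈ S → x.2 u v ∨ x.2 v u) ∧
  ∀ v, ¬ Relation.TransGen x.2 v v

/-- independent sets -/
def Indep {V : Type*} (Γ : SimpleGraph V) (T : Finset V) : Prop :=
  ∀ u ∈ T, ∀ v ∈ T, ¬ Γ.Adj u v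

open Classical in
/-- The finite set of proper partial colorings. -/
noncomputable def Xs {V : Type*} [Fintype V] (Γ : SimpleGraph V) (n : ℕ) (S : Finset V) :
    Finset (V → ℕ) :=
  (Fintype.piFinset fun _ => Finset.range (n + 1)).filter (IsX Γ n S)

open Classical in
/-- The finite set of partial weakly compatible pairs. -/
noncomputable def Ws {V : Type*} [Fintype V] (Γ : SimpleGraph V) (n : ℕ) (S : Finset V) :
    Finset ((V → ℕ) × (V → V → Prop)) :=
  ((Fintype.piFinset fun _ => Finset.range (n + 1)) ×ˢ Finset.univ).filter (IsW Γ n S)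

theorem mem_Xs {V : Type*} [Fintype V] (Γ : SimpleGraph V) (n : ℕ) (S : Finset V)
    (c : V → ℕ) : c ∈ Xs Γ n S ↔ IsX Γ n S c := by
  simp only [Xs, Finset.mem_filter, Fintype.mem_piFinset, Finset.mem_range, and_iff_right_iff_imp]
  intro h u
  exact Nat.lt_succ_of_le (h.1 u)

theorem mem_Ws {V : Type*} [Fintype V] (Γ : SimpleGraph V) (n : ℕ) (S : Finset V)
    (x : (V → ℕ) × (V → V → Prop)) : x ∈ Ws Γ n S ↔ IsW Γ n S x := by
  simp only [Ws, Finset.mem_filter, Finset.mem_product, Fintype.mem_piFinset, Finset.mem_range,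
    Finset.mem_univ, and_true, and_iff_right_iff_imp]
  intro h u
  exact Nat.lt_succ_of_le (h.1 u)

open Classical in
theorem X_rec {V : Type*} [Fintype V] (Γ : SimpleGraph V) (n : ℕ) (S : Finset V) :
    (Xs Γ (n + 1) S).card =
      ∑ T ∈ S.powerset.filter (Indep Γ), (Xs Γ n (S \ T)).card := by
  rw [Finset.card_eq_sum_card_fiberwise (f := fun c => Finset.univ.filter fun v => c v = n + 1)
    (t := S.powerset.filter (Indep Γ))]
  · refine Finset.sum_congr rfl fun T hT => ?_
    simp only [Finset.mem_filter, Finset.mem_powerset] at hT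
    obtain ⟨hTS, hTi⟩ := hT
    refine Finset.card_bij' (fun c _ v => if v ∈ T then 0 else c v)
      (fun c _ v => if v ∈ T then n + 1 else c v) ?_ ?_ ?_ ?_
    · intro c hc
      simp only [Finset.mem_filter, mem_Xs] at hc ⊢
      obtain ⟨⟨h1, h2, h3⟩, h4⟩ := hc
      have h5 : ∀ v, v ∈ T ↔ c v = n + 1 := by intro v; rw [← h4]; simp
      refine ⟨?_, ?_, ?_⟩
      · intro u
        have := h1 u; have := h5 u
        grind
      · intro u
        have := h2 u
        have := @hTS u
        simp only [Finset.mem_sdiff]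
        grind
      · intro u v huv hu hv
        simp only [Finset.mem_sdiff] at hu hv
        simp only [hu.2, hv.2, if_false]
        exact h3 u v huv hu.1 hv.1
    · intro c hc
      simp only [Finset.mem_filter, mem_Xs] at hc ⊢
      obtain ⟨h1, h2, h3⟩ := hc
      simp only [Finset.mem_sdiff] at h2 h3
      refine ⟨⟨?_, ?_, ?_⟩, ?_⟩
      · intro u
        have := h1 u
        grind
      · intro u
        have := h2 u
        have := @hTS u
        grind
      · intro u v huv hu hv
        have := h1 u; have := h1 v
        have := h3 u v huv
        have := hTi u
        grind
      · ext v
        have := h1 v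
        simp only [Finset.mem_filter, Finset.mem_univ, true_and]
        grind
    · intro c hc
      simp only [Finset.mem_filter, mem_Xs] at hc
      funext v
      have h5 : v ∈ T ↔ c v = n + 1 := by rw [← hc.2]; simp
      grind
    · intro c hc
      simp only [mem_Xs] at hc
      funext v
      have := hc.2.1 v
      grind
  · intro c hc
    simp only [Finset.mem_coe, mem_Xs] at hc
    simp only [Finset.coe_filter, Set.mem_ofPred_eq, Finset.mem_powerset]
    obtain ⟨h1, h2, h3⟩ := hc
    have h4 : ∀ u, c u = n + 1 → u ∈ S := by
      intro u hu
      have := h2 u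
      grind
    refine ⟨?_, ?_⟩
    · intro u hu
      simp at hu
      exact h4 u hu
    · intro u hu v hv huv
      simp at hu hv
      exact h3 u v huv (h4 u hu) (h4 v hv) (hu.trans hv.symm)

open Classical in
/-- Sinks of the top color. -/
noncomputable def topSinks {V : Type*} [Fintype V] (n : ℕ) (x : (V → ℕ) × (V → V → Prop)) :
    Finset V :=
  Finset.univ.filter fun v => x.1 v = n + 1 ∧ ∀ w, ¬ x.2 v w

open Classical in
theorem W_fiber {V : Type*} [Fintype V] (Γ : SimpleGraph V) (n : ℕ) (S T : Finset V)
    (hTS : T ⊆ S) (hTi : Indep Γ T) :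
    (Ws Γ (n + 1) (S \ T)).card =
      ((Ws Γ (n + 1) S).filter fun x => T ⊆ topSinks n x).card := by
  symm
  refine Finset.card_bij'
    (fun x _ => (fun v => if v ∈ T then 0 else x.1 v, fun u v => x.2 u v ∧ u ∉ T ∧ v ∉ T))
    (fun x _ => (fun v => if v ∈ T then n + 1 else x.1 v,
      fun u v => x.2 u v ∨ (Γ.Adj u v ∧ u ∈ S ∧ v ∈ T))) ?_ ?_ ?_ ?_
  · rintro ⟨c, r⟩ hc
    simp only [Finset.mem_filter, mem_Ws] at hc ⊢
    obtain ⟨⟨h1, h2, h3, h4, h5⟩, h6⟩ := hc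
    simp only at h1 h2 h3 h4 h5
    refine ⟨?_, ?_, ?_, ?_, ?_⟩
    · intro u
      have := h1 u
      grind
    · intro u
      have := h2 u
      have := @hTS u
      grind
    · rintro u v ⟨h, hu, hv⟩
      have := h3 u v h
      grind
    · intro u v huv hu hv
      have := h4 u v huv
      grind
    · intro v hv
      exact h5 v (Relation.TransGen.mono (fun a b h => h.1) _ _ hv)
  · rintro ⟨c, r⟩ hc
    simp only [Finset.mem_filter, mem_Ws] at hc ⊢
    obtain ⟨h1, h2, h3, h4, h5⟩ := hc
    simp only [Finset.mem_sdiff] at h1 h2 h3 h4 h5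
    have hsink : ∀ u ∈ T, ∀ w, ¬ (r u w ∨ (Γ.Adj u w ∧ u ∈ S ∧ w ∈ T)) := by
      rintro u hu w (h | ⟨h, _, hw⟩)
      · exact (h3 u w h).2.1.2 hu
      · exact hTi u hu w hw h
    refine ⟨⟨?_, ?_, ?_, ?_, ?_⟩, ?_⟩
    · intro u
      have := h1 u
      grind
    · intro u
      have := h2 u
      have := @hTS u
      grind
    · rintro u v h
      have := h3 u v
      have := @hTS v
      have := h1 u
      grind
    · intro u v huv hu hv
      have := h4 u v huv
      have := huv.symm
      grind
    · intro v hv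
      have hvT : v ∉ T := by
        intro hvT
        obtain ⟨w, hw, _⟩ := Relation.TransGen.head'_iff.1 hv
        exact hsink v hvT w hw
      have key : ∀ b, Relation.TransGen
          (fun u v => r u v ∨ (Γ.Adj u v ∧ u ∈ S ∧ v ∈ T)) v b →
          b ∈ T ∨ Relation.TransGen r v b := by
        intro b hb
        induction hb with
        | single h =>
          rcases h with h | h
          · exact Or.inr (.single h)
          · exact Or.inl h.2.2
        | tail _ h ih =>
          rcases ih with ih | ih
          · exact absurd h (hsink _ ih _)
          · rcases h with h | h
            · exact Or.inr (ih.tail h)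
            · exact Or.inl h.2.2
      exact (key v hv).elim hvT (h5 v)
    · intro v hv
      simp only [topSinks, Finset.mem_filter, Finset.mem_univ, true_and, hv, if_true]
      exact hsink v hv
  · rintro ⟨c, r⟩ hc
    simp only [Finset.mem_filter, mem_Ws] at hc
    obtain ⟨⟨h1, h2, h3, h4, h5⟩, h6⟩ := hc
    simp only at h1 h2 h3 h4 h5
    have h7 : ∀ v ∈ T, c v = n + 1 ∧ ∀ w, ¬ r v w := by
      intro v hv
      simpa [topSinks] using h6 hv
    refine Prod.ext ?_ ?_
    · funext v
      have := h7 v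
      grind
    · funext u v
      have := h7 u
      have := h7 v
      have := h3 u v
      have := h4 u v
      have := @hTS v
      grind
  · rintro ⟨c, r⟩ hc
    simp only [mem_Ws] at hc
    obtain ⟨h1, h2, h3, h4, h5⟩ := hc
    simp only [Finset.mem_sdiff] at h1 h2 h3 h4 h5
    refine Prod.ext ?_ ?_
    · funext v
      have := h2 v
      grind
    · funext u v
      have := h3 u v
      grind

theorem exists_sink {V : Type*} [Fintype V] (Γ : SimpleGraph V) (n : ℕ) (S : Finset V)
    (x : (V → ℕ) × (V → V → Prop)) (hx : IsW Γ (n + 1) S x) (v : V) (hv : x.1 v = n + 1) :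
    (topSinks n x).Nonempty := by
  obtain ⟨h1, h2, h3, h4, h5⟩ := hx
  let R : V → V → Prop := fun a b => Relation.TransGen x.2 b a
  have : IsTrans V R := ⟨fun a b c hab hbc => hbc.trans hab⟩
  have : Std.Irrefl R := ⟨fun a h => h5 a h⟩
  have wf : WellFounded R := Finite.wellFounded_of_trans_of_irrefl R
  obtain ⟨m, hm, hmin⟩ := wf.has_min {v | x.1 v = n + 1} ⟨v, hv⟩
  refine ⟨m, ?_⟩
  simp only [topSinks, Finset.mem_filter, Finset.mem_univ, true_and]
  refine ⟨hm, fun w hw => hmin w ?_ (Relation.TransGen.single hw)⟩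
  have := (h3 m w hw).2.2.2
  have := h1 w
  simp only [Set.mem_ofPred_eq] at hm ⊢
  omega

open Classical in
theorem W_noSink {V : Type*} [Fintype V] (Γ : SimpleGraph V) (n : ℕ) (S : Finset V) :
    ((Ws Γ (n + 1) S).filter fun x => topSinks n x = ∅) = Ws Γ n S := by
  ext x
  simp only [Finset.mem_filter, mem_Ws]
  constructor
  · rintro ⟨h, h0⟩
    refine ⟨?_, h.2⟩
    intro u
    have h1 := h.1 u
    by_contra hu
    have := exists_sink Γ n S x h u (by omega)
    rw [h0] at this
    simp at this
  · rintro h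
    refine ⟨⟨fun u => (h.1 u).trans (Nat.le_succ n), h.2⟩, ?_⟩
    ext v
    have := h.1 v
    simp [topSinks]
    omega

open Classical in
theorem W_rec {V : Type*} [Fintype V] (Γ : SimpleGraph V) (n : ℕ) (S : Finset V) :
    ((Ws Γ n S).card : ℚ) =
      ∑ T ∈ S.powerset.filter (Indep Γ), (-1 : ℚ) ^ T.card * (Ws Γ (n + 1) (S \ T)).card := by
  have e1 : ∀ x ∈ Ws Γ (n + 1) S, topSinks n x ⊆ S := by
    intro x hx v hv
    rw [mem_Ws] at hx
    simp only [topSinks, Finset.mem_filter, Finset.mem_univ, true_and] at hv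
    have := hx.2.1 v
    grind
  have e2 : ∀ x ∈ Ws Γ (n + 1) S, Indep Γ (topSinks n x) := by
    intro x hx u hu v hv huv
    have hu' := e1 x hx hu
    have hv' := e1 x hx hv
    rw [mem_Ws] at hx
    simp only [topSinks, Finset.mem_filter, Finset.mem_univ, true_and] at hu hv
    rcases hx.2.2.2.1 u v huv hu' hv' with h | h
    · exact hu.2 _ h
    · exact hv.2 _ h
  have e3 : ∀ T ∈ S.powerset.filter (Indep Γ),
      (-1 : ℚ) ^ T.card * (Ws Γ (n + 1) (S \ T)).card =
      ∑ x ∈ Ws Γ (n + 1) S, if T ⊆ topSinks n x then (-1 : ℚ) ^ T.card else 0 := by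
    intro T hT
    simp only [Finset.mem_filter, Finset.mem_powerset] at hT
    rw [W_fiber Γ n S T hT.1 hT.2, ← Finset.sum_filter, Finset.sum_const, nsmul_eq_mul, mul_comm]
  rw [Finset.sum_congr rfl e3, Finset.sum_comm, ← W_noSink, Finset.card_filter, Nat.cast_sum]
  refine Finset.sum_congr rfl fun x hx => ?_
  rw [← Finset.sum_filter]
  have e4 : (S.powerset.filter (Indep Γ)).filter (fun T => T ⊆ topSinks n x) =
      (topSinks n x).powerset := by
    ext T
    simp only [Finset.mem_filter, Finset.mem_powerset]
    constructor
    · exact fun h => h.2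
    · exact fun h => ⟨⟨h.trans (e1 x hx), fun u hu v hv => e2 x hx u (h hu) v (h hv)⟩, h⟩
  rw [e4]
  have := congrArg (Int.cast : ℤ → ℚ) (Finset.sum_powerset_neg_one_pow_card (x := topSinks n x))
  push_cast at this
  rw [this]
  split_ifs <;> simp

theorem XW_zero {V : Type*} [Fintype V] (Γ : SimpleGraph V) (S : Finset V) :
    ((Xs Γ 0 S).card : ℚ) = (-1) ^ S.card * (Ws Γ 0 S).card := by
  rcases S.eq_empty_or_nonempty with rfl | ⟨v, hv⟩
  · have h1 : Xs Γ 0 ∅ = {fun _ => 0} := by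
      ext c
      rw [mem_Xs, Finset.mem_singleton]
      constructor
      · intro h
        funext u
        exact Nat.le_zero.1 (h.1 u)
      · rintro rfl
        simp [IsX]
    have h2 : Ws Γ 0 ∅ = {(fun _ => 0, fun _ _ => False)} := by
      ext c
      rw [mem_Ws, Finset.mem_singleton]
      constructor
      · intro h
        refine Prod.ext ?_ ?_
        · funext u
          exact Nat.le_zero.1 (h.1 u)
        · funext u v
          have := h.2.2.1 u v
          simp at this
          simp [this]
      · rintro rfl
        refine ⟨by simp, by simp, by simp, by simp, ?_⟩
        intro v hv
        obtain ⟨w, hw, _⟩ := Relation.TransGen.head'_iff.1 hv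
        exact hw
    rw [h1, h2]
    simp
  · have h1 : Xs Γ 0 S = ∅ := by
      ext c
      simp only [mem_Xs, Finset.notMem_empty, iff_false]
      intro h
      exact (h.2.1 v).1 (Nat.le_zero.1 (h.1 v)) hv
    have h2 : Ws Γ 0 S = ∅ := by
      ext c
      simp only [mem_Ws, Finset.notMem_empty, iff_false]
      intro h
      exact (h.2.1 v).1 (Nat.le_zero.1 (h.1 v)) hv
    rw [h1, h2]
    simp

/-- The two-sided counting function. -/
noncomputable def qFun {V : Type*} [Fintype V] (Γ : SimpleGraph V) (S : Finset V) : ℤ → ℚ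
  | Int.ofNat n => (Xs Γ n S).card
  | Int.negSucc n => (-1) ^ S.card * (Ws Γ (n + 1) S).card

theorem qFun_neg {V : Type*} [Fintype V] (Γ : SimpleGraph V) (S : Finset V) (n : ℕ) :
    qFun Γ S (-(n : ℤ)) = (-1) ^ S.card * (Ws Γ n S).card := by
  cases n with
  | zero => exact XW_zero Γ S
  | succ n => rfl

open Classical in
theorem qFun_rec {V : Type*} [Fintype V] (Γ : SimpleGraph V) (S : Finset V) (m : ℤ) :
    qFun Γ S (m + 1) = ∑ T ∈ S.powerset.filter (Indep Γ), qFun Γ (S \ T) m := by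
  cases m with
  | ofNat n =>
    have : (Int.ofNat n + 1) = Int.ofNat (n + 1) := rfl
    rw [this]
    simp only [qFun, X_rec, Nat.cast_sum]
  | negSucc n =>
    have : (Int.negSucc n + 1) = -(n : ℤ) := by omega
    rw [this, qFun_neg, W_rec, Finset.mul_sum]
    refine Finset.sum_congr rfl fun T hT => ?_
    simp only [Finset.mem_filter, Finset.mem_powerset] at hT
    simp only [qFun]
    rw [← mul_assoc]
    congr 1
    have h := Finset.card_sdiff_add_card_eq_card hT.1
    rw [← h, pow_add, mul_assoc, ← pow_add, ← two_mul, pow_mul]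
    simp

open Classical in
theorem qFun_diff {V : Type*} [Fintype V] (Γ : SimpleGraph V) (d : ℕ) (S : Finset V)
    (h : S.card < d) : (fwdDiff (1 : ℤ))^[d] (qFun Γ S) = 0 := by
  induction d generalizing S with
  | zero => omega
  | succ d ih =>
    have e : fwdDiff (1 : ℤ) (qFun Γ S) =
        ∑ T ∈ (S.powerset.filter (Indep Γ)).erase ∅, qFun Γ (S \ T) := by
      funext m
      rw [fwdDiff, qFun_rec, Finset.sum_apply, ← Finset.add_sum_erase _ _ (a := ∅)]
      · simp
      · simp [Indep]
    rw [Function.iterate_succ_apply, e, fwdDiff_iter_finsetSum]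
    refine Finset.sum_eq_zero fun T hT => ih _ ?_
    simp only [Finset.mem_erase, Finset.mem_filter, Finset.mem_powerset] at hT
    have h1 := Finset.card_sdiff_add_card_eq_card hT.2.1
    have h2 := Finset.card_pos.2 (Finset.nonempty_iff_ne_empty.2 hT.1)
    omega

theorem vanish (d : ℕ) (f : ℤ → ℚ) (h : (fwdDiff (1 : ℤ))^[d] f = 0)
    (h1 : ∀ m : ℤ, 1 ≤ m → f m = 0) (m : ℤ) : f m = 0 := by
  induction d generalizing f m with
  | zero => exact congrFun h m
  | succ d ih =>
    have h2 := ih (fwdDiff 1 f) h (by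
      intro m hm
      rw [fwdDiff, h1 _ hm, h1 _ (by omega), sub_zero])
    have h3 : ∀ k : ℕ, f (1 - (k : ℤ)) = 0 := by
      intro k
      induction k with
      | zero => exact h1 _ (by simp)
      | succ k ihk =>
        have h4 := h2 (1 - ((k + 1 : ℕ) : ℤ))
        have h5 : (1 - ((k + 1 : ℕ) : ℤ)) + 1 = 1 - (k : ℤ) := by push_cast; ring
        rw [fwdDiff, h5, ihk] at h4
        linarith
    rcases le_or_gt 1 m with hm | hm
    · exact h1 m hm
    · have := h3 (1 - m).toNat
      rwa [Int.toNat_of_nonneg (by omega), sub_sub_cancel] at this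

theorem card_X_univ {V : Type*} [Fintype V] (Γ : SimpleGraph V) (n : ℕ) :
    Nat.card {c : V → Fin n // ∀ u v : V, Γ.Adj u v → c u ≠ c v} =
      (Xs Γ n Finset.univ).card := by
  rw [← Nat.card_eq_finsetCard]
  refine Nat.card_eq_of_bijective (fun c => ⟨fun v => (c.1 v : ℕ) + 1, ?_⟩) ⟨?_, ?_⟩
  · rw [mem_Xs]
    refine ⟨fun u => (c.1 u).2, by simp, ?_⟩
    intro u v huv _ _ h
    exact c.2 u v huv (Fin.ext (Nat.succ.inj h))
  · rintro ⟨c, hc⟩ ⟨c', hc'⟩ h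
    simp only [Subtype.mk.injEq] at h ⊢
    funext v
    have := congrFun h v
    exact Fin.ext (by omega)
  · rintro ⟨c, hc⟩
    have hc' := hc
    rw [mem_Xs] at hc'
    obtain ⟨h1, h2, h3⟩ := hc'
    have h0 : ∀ v, c v ≠ 0 := fun v => by simp [h2 v]
    refine ⟨⟨fun v => ⟨c v - 1, by have := h1 v; have := h0 v; omega⟩, ?_⟩, ?_⟩
    · intro u v huv h
      have := h0 u
      have := h0 v
      simp only [Fin.mk.injEq] at h
      exact h3 u v huv (Finset.mem_univ _) (Finset.mem_univ _) (by omega)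
    · apply Subtype.ext
      funext v
      have := h0 v
      simp only
      omega

theorem dirAdj_total {V : Type*} (Γ : SimpleGraph V) (s : GraphOri Γ) (u v : V)
    (h : Γ.Adj u v) : dirAdj Γ s u v ∨ dirAdj Γ s v u := by
  have h1 := s.2 ⟨s(u, v), Γ.mem_edgeSet.mpr h⟩
  rw [Sym2.mem_iff] at h1
  rcases h1 with h1 | h1
  · right
    refine ⟨h.symm, ?_⟩
    have : (⟨s(v, u), Γ.mem_edgeSet.mpr h.symm⟩ : Γ.edgeSet) =
      ⟨s(u, v), Γ.mem_edgeSet.mpr h⟩ := Subtype.ext Sym2.eq_swap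
    rw [this]
    exact h1
  · left
    exact ⟨h, h1⟩

theorem dirAdj_asymm {V : Type*} (Γ : SimpleGraph V) (s : GraphOri Γ) (u v : V)
    (h : dirAdj Γ s u v) (h' : dirAdj Γ s v u) : False := by
  obtain ⟨h1, h2⟩ := h
  obtain ⟨h3, h4⟩ := h'
  have : (⟨s(v, u), Γ.mem_edgeSet.mpr h3⟩ : Γ.edgeSet) =
      ⟨s(u, v), Γ.mem_edgeSet.mpr h1⟩ := Subtype.ext Sym2.eq_swap
  rw [this, h2] at h4
  exact h1.ne h4.symm

theorem dirAdj_inj {V : Type*} (Γ : SimpleGraph V) (s s' : GraphOri Γ)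
    (h : dirAdj Γ s = dirAdj Γ s') : s = s' := by
  apply Subtype.ext
  funext ⟨e, he⟩
  induction e using Sym2.ind with
  | _ u v =>
    have hA : Γ.Adj u v := Γ.mem_edgeSet.1 he
    have aux : ∀ t : GraphOri Γ, dirAdj Γ t v u → t.1 ⟨s(u, v), he⟩ = u := by
      rintro t ⟨h1, h2⟩
      have : (⟨s(u, v), he⟩ : Γ.edgeSet) =
        ⟨s(v, u), Γ.mem_edgeSet.mpr h1⟩ := Subtype.ext Sym2.eq_swap
      rw [this]
      exact h2
    rcases dirAdj_total Γ s u v hA with h1 | h1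
    · have h2 := h1
      rw [h] at h2
      obtain ⟨_, h1⟩ := h1
      obtain ⟨_, h2⟩ := h2
      exact h1.trans h2.symm
    · have h2 := h1
      rw [h] at h2
      exact (aux s h1).trans (aux s' h2).symm

theorem card_W_univ {V : Type*} [Fintype V] (Γ : SimpleGraph V) (n : ℕ) :
    Nat.card {pr : (V → Fin n) × GraphOri Γ // oriAcyclic Γ pr.2 ∧ weakCompat Γ pr.1 pr.2} =
      (Ws Γ n Finset.univ).card := by
  rw [← Nat.card_eq_finsetCard]
  refine Nat.card_eq_of_bijective
    (fun x => ⟨(fun v => (x.1.1 v : ℕ) + 1, dirAdj Γ x.1.2), ?_⟩) ⟨?_, ?_⟩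
  · obtain ⟨⟨c, s⟩, ha, hw⟩ := x
    rw [mem_Ws]
    refine ⟨fun u => (c u).2, by simp, ?_, ?_, ha⟩
    · intro u v huv
      refine ⟨huv.1, Finset.mem_univ _, Finset.mem_univ _, ?_⟩
      by_contra hlt
      simp only [not_le, add_lt_add_iff_right] at hlt
      exact dirAdj_asymm Γ s u v huv ⟨huv.1.symm, hw v u huv.1.symm hlt⟩
    · intro u v huv _ _
      exact dirAdj_total Γ s u v huv
  · rintro ⟨⟨c, s⟩, hc⟩ ⟨⟨c', s'⟩, hc'⟩ h
    simp only [Subtype.mk.injEq, Prod.mk.injEq] at h ⊢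
    refine ⟨?_, dirAdj_inj Γ s s' h.2⟩
    funext v
    have := congrFun h.1 v
    exact Fin.ext (by omega)
  · rintro ⟨⟨c, r⟩, hc⟩
    have hc' := hc
    rw [mem_Ws] at hc'
    obtain ⟨h1, h2, h3, h4, h5⟩ := hc'
    simp only at h1 h2 h3 h4 h5
    have h0 : ∀ v, c v ≠ 0 := fun v => by simp [h2 v]
    have hex : ∀ e : Γ.edgeSet, ∃ v, ∃ u, (e : Sym2 V) = s(u, v) ∧ r u v := by
      rintro ⟨e, he⟩
      induction e using Sym2.ind with
      | _ u v =>
        rcases h4 u v (Γ.mem_edgeSet.1 he) (Finset.mem_univ _) (Finset.mem_univ _) with h | h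
        · exact ⟨v, u, rfl, h⟩
        · exact ⟨u, v, Sym2.eq_swap, h⟩
    choose head tl htl hr using hex
    let s : GraphOri Γ := ⟨head, fun e => by rw [htl e]; simp⟩
    have hasym : ∀ u v, r u v → r v u → False := fun u v h h' =>
      h5 u ((Relation.TransGen.single h).tail h')
    have hs : dirAdj Γ s = r := by
      funext u v
      apply propext
      constructor
      · rintro ⟨h, hh⟩
        have e1 := htl ⟨s(u, v), Γ.mem_edgeSet.mpr h⟩
        have e2 := hr ⟨s(u, v), Γ.mem_edgeSet.mpr h⟩
        change head _ = v at hh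
        rw [hh] at e1 e2
        simp only [Sym2.congr_left] at e1
        rwa [← e1] at e2
      · intro h
        refine ⟨(h3 u v h).1, ?_⟩
        have e1 := htl ⟨s(u, v), Γ.mem_edgeSet.mpr (h3 u v h).1⟩
        have e2 := hr ⟨s(u, v), Γ.mem_edgeSet.mpr (h3 u v h).1⟩
        simp only [Sym2.eq_iff] at e1
        rcases e1 with ⟨_, e⟩ | ⟨e, e'⟩
        · exact e.symm
        · rw [← e, ← e'] at e2
          exact (hasym _ _ h e2).elim
    refine ⟨⟨(fun v => ⟨c v - 1, by have := h1 v; have := h0 v; omega⟩, s), ?_, ?_⟩, ?_⟩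
    · intro v
      change ¬ Relation.TransGen (dirAdj Γ s) v v
      rw [hs]
      exact h5 v
    · intro u v huv hlt
      simp only [Fin.mk_lt_mk] at hlt
      have : dirAdj Γ s u v := by
        rw [hs]
        rcases h4 u v huv (Finset.mem_univ _) (Finset.mem_univ _) with h | h
        · exact h
        · have := (h3 v u h).2.2.2
          omega
      obtain ⟨_, h⟩ := this
      exact h
    · apply Subtype.ext
      refine Prod.ext ?_ hs
      funext v
      have := h0 v
      simp only
      omega

/-- Stanley's reciprocity for graph colorings. Let `Γ` be a finite
simple graph and `χ_Γ` its chromatic polynomial.  Then for all integers `n ≥ 1`,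
`|χ_Γ(-n)|` equals the number of weakly compatible pairs `(c,σ)` consisting of an
`n`-coloring `c` and an acyclic orientation `σ` of `Γ`.  In particular, `|χ_Γ(-1)|`
equals the number of acyclic orientations of `Γ`. -/
theorem stmt_17 {V : Type*} [Fintype V] [DecidableEq V] (Γ : SimpleGraph V)
    (p : Polynomial ℚ)
    (hp : ∀ n : ℕ, 1 ≤ n →
      p.eval (n : ℚ) = Nat.card {c : V → Fin n // ∀ u v : V, Γ.Adj u v → c u ≠ c v}) :
    (∀ n : ℕ, 1 ≤ n →
      |p.eval (-(n : ℚ))| = Nat.card {pr : (V → Fin n) × GraphOri Γ //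
        oriAcyclic Γ pr.2 ∧ weakCompat Γ pr.1 pr.2}) ∧
    |p.eval (-1 : ℚ)| = Nat.card {σ : GraphOri Γ // oriAcyclic Γ σ} := by
  have hkey : ∀ n : ℕ, 1 ≤ n →
      |p.eval (-(n : ℚ))| = Nat.card {pr : (V → Fin n) × GraphOri Γ //
        oriAcyclic Γ pr.2 ∧ weakCompat Γ pr.1 pr.2} := by
    intro n hn
    have h1 := vanish (p.natDegree + 1 + (Fintype.card V + 1))
      (fun m : ℤ => qFun Γ Finset.univ m - p.eval (m : ℚ)) ?_ ?_ (-(n : ℤ))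
    · simp only [Int.cast_neg, Int.cast_natCast, sub_eq_zero] at h1
      rw [← h1, qFun_neg, abs_mul, abs_pow, abs_neg, abs_one, one_pow, one_mul, Nat.abs_cast,
        card_W_univ]
    · have e1 : (fun m : ℤ => qFun Γ Finset.univ m - p.eval (m : ℚ)) =
          (qFun Γ Finset.univ) + (-1 : ℤ) • (fun m : ℤ => p.eval (m : ℚ)) := by
        funext m; simp [sub_eq_add_neg]
      rw [e1, fwdDiff_iter_add, fwdDiff_iter_const_smul]
      rw [qFun_diff Γ _ Finset.univ (by rw [Finset.card_univ]; omega)]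
      have e2 : (fwdDiff (1 : ℤ))^[p.natDegree + 1 + (Fintype.card V + 1)]
          (fun m : ℤ => p.eval (m : ℚ)) = 0 := by
        funext x
        have h2 := congrFun (Polynomial.fwdDiff_iter_eq_zero_of_degree_lt (P := p)
          (n := p.natDegree + 1 + (Fintype.card V + 1)) (by omega)) (x : ℚ)
        rw [fwdDiff_iter_eq_sum_shift] at h2 ⊢
        simpa using h2
      rw [e2]; simp
    · intro m hm
      obtain ⟨k, rfl⟩ := Int.eq_ofNat_of_zero_le (by omega : 0 ≤ m)
      have hk : 1 ≤ k := by omega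
      simp only [Int.cast_natCast, hp k hk, card_X_univ]
      simp [qFun]
  refine ⟨hkey, ?_⟩
  have h1 := hkey 1 le_rfl
  simp only [Nat.cast_one] at h1
  rw [h1]
  congr 1
  refine Nat.card_eq_of_bijective
    (fun x : {pr : (V → Fin 1) × GraphOri Γ // oriAcyclic Γ pr.2 ∧ weakCompat Γ pr.1 pr.2} =>
      (⟨x.1.2, x.2.1⟩ : {σ : GraphOri Γ // oriAcyclic Γ σ})) ⟨?_, ?_⟩
  · rintro ⟨⟨c, s⟩, h⟩ ⟨⟨c', s'⟩, h'⟩ e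
    simp only [Subtype.mk.injEq] at e
    subst e
    have : c = c' := Subsingleton.elim _ _
    subst this
    rfl
  · rintro ⟨s, hs⟩
    refine ⟨⟨(fun _ => 0, s), hs, ?_⟩, rfl⟩
    intro u v h h2
    simp at h2
end

section
/- Let Γ be a finite simple graph and G a finite group acting on Γ by automorphisms. Then the function χ⁺_{Γ,G}(n) = |Col_{n,+}(Γ)/G| counting G-orbits of even proper n-colorings agrees for all n ≥ 1 with a polynomial of degree |V|, and this polynomial satisfies χ⁺_{Γ,G}(-n) = (-1)^{|V|} · |Σ_n(Γ)/G| for all integers n ≥ 1, where Σ_n(Γ)/G is the set of G-orbits of weakly compatible pairs of an n-coloring and an acyclic orientation. -/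
namespace Recip
open Finset Classical

noncomputable section

variable {W : Type*} [Fintype W]

/-- proper colorings of `T` -/
def hset (A : W → W → Prop) (T : Finset W) (n : ℕ) : Finset (W → ℕ) :=
  (Fintype.piFinset fun w => if w ∈ T then range n else {0}).filter
    (fun c => ∀ u ∈ T, ∀ v ∈ T, A u v → c u ≠ c v)

/-- compatible pairs on `T` -/
def wset (A : W → W → Prop) (T : Finset W) (n : ℕ) : Finset ((W → ℕ) × (W → W → Prop)) :=
  ((Fintype.piFinset fun w => if w ∈ T then range n else {0}) ×ˢ univ).filter
    (fun x => (∀ u v, x.2 u v → u ∈ T ∧ v ∈ T ∧ A u v ∧ x.1 u ≤ x.1 v) ∧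
      (∀ u ∈ T, ∀ v ∈ T, A u v → x.2 u v ∨ x.2 v u) ∧
      ∃ r : W → ℕ, ∀ u v, x.2 u v → r u < r v)

lemma mem_pi_aux (T : Finset W) (n : ℕ) (c : W → ℕ) :
    (c ∈ Fintype.piFinset fun w => if w ∈ T then range n else {0}) ↔
      (∀ w ∈ T, c w < n) ∧ (∀ w, w ∉ T → c w = 0) := by
  rw [Fintype.mem_piFinset]
  constructor
  · intro h
    refine ⟨fun w hw => ?_, fun w hw => ?_⟩
    · simpa [hw] using h w
    · simpa [hw] using h w
  · rintro ⟨h1, h2⟩ w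
    by_cases hw : w ∈ T
    · simpa [hw] using h1 w hw
    · simpa [hw] using h2 w hw

lemma mem_hset {A : W → W → Prop} {T : Finset W} {n : ℕ} {c : W → ℕ} :
    c ∈ hset A T n ↔ ((∀ w ∈ T, c w < n) ∧ (∀ w, w ∉ T → c w = 0)) ∧
      ∀ u ∈ T, ∀ v ∈ T, A u v → c u ≠ c v := by
  rw [hset, mem_filter, mem_pi_aux]

lemma mem_wset {A : W → W → Prop} {T : Finset W} {n : ℕ} {x : (W → ℕ) × (W → W → Prop)} :
    x ∈ wset A T n ↔ ((∀ w ∈ T, x.1 w < n) ∧ (∀ w, w ∉ T → x.1 w = 0)) ∧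
      (∀ u v, x.2 u v → u ∈ T ∧ v ∈ T ∧ A u v ∧ x.1 u ≤ x.1 v) ∧
      (∀ u ∈ T, ∀ v ∈ T, A u v → x.2 u v ∨ x.2 v u) ∧
      ∃ r : W → ℕ, ∀ u v, x.2 u v → r u < r v := by
  rw [wset, mem_filter, mem_product, mem_pi_aux]
  simp

/-- independent subsets of `T` -/
def ind (A : W → W → Prop) (T : Finset W) : Finset (Finset W) :=
  T.powerset.filter (fun S => ∀ u ∈ S, ∀ v ∈ S, ¬ A u v)

lemma mem_ind {A : W → W → Prop} {T S : Finset W} :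
    S ∈ ind A T ↔ S ⊆ T ∧ ∀ u ∈ S, ∀ v ∈ S, ¬ A u v := by
  simp [ind]

lemma hset_succ (A : W → W → Prop) (T : Finset W) (n : ℕ) :
    (hset A T (n + 1)).card = ∑ S ∈ ind A T, (hset A (T \ S) n).card := by
  rw [← Finset.card_sigma]
  refine Finset.card_bij' (fun c _ => ⟨T.filter (fun w => c w = n), fun w => if c w = n then 0 else c w⟩)
    (fun y _ => fun w => if w ∈ y.1 then n else y.2 w) ?_ ?_ ?_ ?_
  · intro c hc
    obtain ⟨⟨h1, h2⟩, h3⟩ := mem_hset.1 hc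
    refine mem_sigma.2 ⟨mem_ind.2 ⟨filter_subset _ _, ?_⟩, mem_hset.2 ⟨⟨?_, ?_⟩, ?_⟩⟩
    · grind
    · intro w hw
      have := h1 w
      grind
    · intro w hw
      grind
    · intro u hu v hv huv
      have := h3 u
      grind
  · rintro ⟨S, c⟩ hy
    obtain ⟨hS, hc⟩ := mem_sigma.1 hy
    obtain ⟨hS1, hS2⟩ := mem_ind.1 hS
    obtain ⟨⟨h1, h2⟩, h3⟩ := mem_hset.1 hc
    dsimp only at *
    refine mem_hset.2 ⟨⟨?_, ?_⟩, ?_⟩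
    · intro w hw
      have := h1 w
      grind
    · intro w hw
      have : w ∉ S := fun h => hw (hS1 h)
      grind
    · intro u hu v hv huv
      have := h3 u
      have := h1 u
      have := h1 v
      have := hS2 u
      grind
  · intro c hc
    obtain ⟨⟨h1, h2⟩, h3⟩ := mem_hset.1 hc
    funext w
    have := h2 w
    grind
  · rintro ⟨S, c⟩ hy
    obtain ⟨hS, hc⟩ := mem_sigma.1 hy
    obtain ⟨hS1, hS2⟩ := mem_ind.1 hS
    obtain ⟨⟨h1, h2⟩, h3⟩ := mem_hset.1 hc
    dsimp only at *
    have e1 : (T.filter (fun w => (if w ∈ S then n else c w) = n)) = S := by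
      ext w
      have := h1 w
      have := @hS1 w
      grind
    have e2 : (fun w => if (if w ∈ S then n else c w) = n then 0 else (if w ∈ S then n else c w)) = c := by
      funext w
      have := h2 w
      grind
    simp only [e1, e2]

lemma wset_succ (A : W → W → Prop) (hA : ∀ u v, A u v → A v u) (T : Finset W) (n : ℕ) :
    (-1 : ℚ) ^ T.card * (wset A T n).card =
      ∑ S ∈ ind A T, (-1 : ℚ) ^ (T \ S).card * (wset A (T \ S) (n + 1)).card := by
  set Z : ((W → ℕ) × (W → W → Prop)) → Finset W :=
    fun x => T.filter (fun v => x.1 v = n ∧ ∀ w, ¬ x.2 v w) with hZ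
  have memZ : ∀ x v, v ∈ Z x ↔ v ∈ T ∧ x.1 v = n ∧ ∀ w, ¬ x.2 v w := by
    intro x v
    simp [hZ]
  have key : ∑ S ∈ ind A T, (-1 : ℚ) ^ (T \ S).card * (wset A (T \ S) (n + 1)).card =
      ∑ x ∈ wset A T (n + 1), ∑ S ∈ (Z x).powerset, (-1 : ℚ) ^ (T \ S).card := by
    have : ∀ S ∈ ind A T, (-1 : ℚ) ^ (T \ S).card * (wset A (T \ S) (n + 1)).card =
      ∑ x ∈ wset A (T \ S) (n + 1), (-1 : ℚ) ^ (T \ S).card := by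
      intro S _
      rw [sum_const, nsmul_eq_mul, mul_comm]
    rw [sum_congr rfl this, Finset.sum_sigma', Finset.sum_sigma']
    refine Finset.sum_bij'
      (fun y _ => ⟨(fun w => if w ∈ y.1 then n else y.2.1 w,
        fun u v => y.2.2 u v ∨ (A u v ∧ u ∈ T \ y.1 ∧ v ∈ y.1)), y.1⟩)
      (fun y _ => ⟨y.2, (fun w => if w ∈ y.2 then 0 else y.1.1 w,
        fun u v => y.1.2 u v ∧ v ∉ y.2)⟩) ?_ ?_ ?_ ?_ ?_
    · rintro ⟨S, c, σ⟩ hy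
      obtain ⟨hS, hc⟩ := mem_sigma.1 hy
      obtain ⟨hS1, hS2⟩ := mem_ind.1 hS
      obtain ⟨⟨h1, h2⟩, h3, h4, r, h5⟩ := mem_wset.1 hc
      dsimp only at *
      refine mem_sigma.2 ⟨mem_wset.2 ⟨⟨?_, ?_⟩, ?_, ?_, fun w => if w ∈ S then (univ.sup r) + 1 else r w, ?_⟩, mem_powerset.2 ?_⟩
      · intro w hw
        have := h1 w
        grind
      · intro w hw
        have := h2 w
        have := @hS1 w
        grind
      · intro u v huv
        have := h3 u v
        have := h1 u
        have := @hS1 v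
        grind
      · intro u hu v hv huv
        have := h4 u
        have := hS2 u
        have := hA u v
        grind
      · intro u v huv
        have := h3 u v
        have := h5 u v
        have : r u ≤ univ.sup r := Finset.le_sup (mem_univ u)
        grind
      · intro v hv
        refine (memZ _ _).2 ⟨hS1 hv, ?_, ?_⟩
        · simp [hv]
        · intro w
          have := h3 v w
          grind
    · rintro ⟨⟨c, σ⟩, S⟩ hy
      obtain ⟨hc, hS⟩ := mem_sigma.1 hy
      obtain ⟨⟨h1, h2⟩, h3, h4, r, h5⟩ := mem_wset.1 hc
      have hS' : ∀ v ∈ S, v ∈ T ∧ c v = n ∧ ∀ w, ¬ σ v w := fun v hv => by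
        have := mem_powerset.1 hS hv
        simpa [hZ] using this
      dsimp only at *
      refine mem_sigma.2 ⟨mem_ind.2 ⟨fun v hv => (hS' v hv).1, ?_⟩,
        mem_wset.2 ⟨⟨?_, ?_⟩, ?_, ?_, r, ?_⟩⟩
      · intro u hu v hv huv
        have := h4 u
        have := hS' u hu
        have := hS' v hv
        grind
      · intro w hw
        have := h1 w
        grind
      · intro w hw
        have := h2 w
        grind
      · intro u v huv
        have := h3 u v
        have := hS' u
        grind
      · intro u hu v hv huv
        have := h4 u
        grind
      · intro u v huv
        exact h5 u v huv.1
    · rintro ⟨S, c, σ⟩ hy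
      obtain ⟨hS, hc⟩ := mem_sigma.1 hy
      obtain ⟨hS1, hS2⟩ := mem_ind.1 hS
      obtain ⟨⟨h1, h2⟩, h3, h4, r, h5⟩ := mem_wset.1 hc
      dsimp only at *
      have e1 : (fun w => if w ∈ S then 0 else if w ∈ S then n else c w) = c := by
        funext w
        have := h2 w
        grind
      have e2 : (fun u v => (σ u v ∨ (A u v ∧ u ∈ T \ S ∧ v ∈ S)) ∧ v ∉ S) = σ := by
        funext u v
        have := h3 u v
        grind
      simp only [e1, e2]
    · rintro ⟨⟨c, σ⟩, S⟩ hy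
      obtain ⟨hc, hS⟩ := mem_sigma.1 hy
      obtain ⟨⟨h1, h2⟩, h3, h4, r, h5⟩ := mem_wset.1 hc
      have hS' : ∀ v ∈ S, v ∈ T ∧ c v = n ∧ ∀ w, ¬ σ v w := fun v hv => by
        have := mem_powerset.1 hS hv
        simpa [hZ] using this
      dsimp only at *
      have e1 : (fun w => if w ∈ S then n else if w ∈ S then 0 else c w) = c := by
        funext w
        have := hS' w
        grind
      have e2 : (fun u v => (σ u v ∧ v ∉ S) ∨ (A u v ∧ u ∈ T \ S ∧ v ∈ S)) = σ := by
        funext u v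
        have := h3 u v
        have := h4 u
        have := hS' u
        have := hS' v
        grind
      simp only [e1, e2]
    · rintro ⟨S, c, σ⟩ hy
      rfl
  rw [key]
  have hsub : ∀ x, Z x ⊆ T := fun x => filter_subset _ _
  have step : ∀ x ∈ wset A T (n + 1), ∑ S ∈ (Z x).powerset, (-1 : ℚ) ^ (T \ S).card =
      if Z x = ∅ then (-1 : ℚ) ^ T.card else 0 := by
    intro x _
    have h1 : ∀ S ∈ (Z x).powerset, (-1 : ℚ) ^ (T \ S).card = (-1) ^ T.card * (-1) ^ S.card := by
      intro S hS
      have hST : S ⊆ T := (mem_powerset.1 hS).trans (hsub x)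
      rw [← card_sdiff_add_card_eq_card hST, pow_add, mul_assoc, ← pow_add, ← two_mul]
      simp
    rw [sum_congr rfl h1, ← mul_sum]
    have := Finset.sum_powerset_neg_one_pow_card (x := Z x)
    have h2 : ∑ S ∈ (Z x).powerset, (-1 : ℚ) ^ S.card = if Z x = ∅ then 1 else 0 := by
      exact_mod_cast this
    rw [h2]
    split_ifs <;> simp
  rw [sum_congr rfl step, ← sum_filter, sum_const, nsmul_eq_mul, mul_comm]
  congr 3
  ext ⟨c, σ⟩
  rw [mem_filter, mem_wset, mem_wset]
  dsimp only
  constructor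
  · rintro ⟨⟨h1, h2⟩, h3, h4, r, h5⟩
    refine ⟨⟨⟨fun w hw => (h1 w hw).trans (Nat.lt_succ_self n), h2⟩, h3, h4, r, h5⟩, ?_⟩
    rw [hZ]
    refine filter_eq_empty_iff.2 ?_
    intro v hv
    have := h1 v hv
    grind
  · rintro ⟨⟨⟨h1, h2⟩, h3, h4, r, h5⟩, h6⟩
    refine ⟨⟨?_, h2⟩, h3, h4, r, h5⟩
    by_contra hcon
    push Not at hcon
    obtain ⟨w, hw, hwn⟩ := hcon
    obtain ⟨v, hv, hmax⟩ := Finset.exists_max_image (T.filter (fun v => c v = n)) r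
      ⟨w, mem_filter.2 ⟨hw, by have := h1 w hw; omega⟩⟩
    obtain ⟨hvT, hvn⟩ := mem_filter.1 hv
    have : v ∈ Z (c, σ) := by
      refine mem_filter.2 ⟨hvT, hvn, ?_⟩
      intro y hy
      dsimp only at hy
      obtain ⟨_, hyT, _, hle⟩ := h3 v y hy
      have := h1 y hyT
      have := hmax y (mem_filter.2 ⟨hyT, by omega⟩)
      have := h5 v y hy
      omega
    rw [h6] at this
    simp at this


lemma bernoulli_natDegree_le (k : ℕ) : (Polynomial.bernoulli k).natDegree ≤ k := by
  rw [Polynomial.natDegree_le_iff_coeff_eq_zero]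
  intro N hN
  rw [Polynomial.coeff_bernoulli]
  simp [hN]

lemma bernoulli_coeff_self (k : ℕ) : (Polynomial.bernoulli k).coeff k = 1 := by
  rw [Polynomial.coeff_bernoulli]
  simp

lemma antidiff (q : Polynomial ℚ) (d : ℕ) (hq : q.natDegree ≤ d) (a : ℚ) :
    ∃ P : Polynomial ℚ, P.natDegree ≤ d + 1 ∧ P.coeff (d + 1) * (d + 1) = q.coeff d ∧
      P.eval 0 = a ∧ ∀ x, P.eval (x + 1) = P.eval x + q.eval x := by
  let P0 : Polynomial ℚ := ∑ k ∈ range (d + 1),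
    Polynomial.C (q.coeff k / (k + 1)) * Polynomial.bernoulli (k + 1)
  have hdeg : P0.natDegree ≤ d + 1 := by
    refine Polynomial.natDegree_sum_le_of_forall_le _ _ fun k hk => ?_
    refine (Polynomial.natDegree_C_mul_le _ _).trans ((bernoulli_natDegree_le _).trans ?_)
    have := mem_range.1 hk
    omega
  have hcoeff : P0.coeff (d + 1) * (d + 1) = q.coeff d := by
    have h1 : P0.coeff (d + 1) = q.coeff d / (d + 1) := by
      simp only [P0]
      rw [sum_range_succ, Polynomial.coeff_add, Polynomial.finsetSum_coeff,
        Polynomial.coeff_C_mul, bernoulli_coeff_self, sum_eq_zero, zero_add, mul_one]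
      intro k hk
      rw [Polynomial.coeff_C_mul, Polynomial.coeff_eq_zero_of_natDegree_lt (p := Polynomial.bernoulli (k + 1)), mul_zero]
      have := mem_range.1 hk
      have := bernoulli_natDegree_le (k + 1)
      omega
    rw [h1]
    have : (d + 1 : ℚ) ≠ 0 := by positivity
    field_simp
  have hev : ∀ x, P0.eval (x + 1) = P0.eval x + q.eval x := by
    intro x
    rw [Polynomial.eval_eq_sum_range' (Nat.lt_succ_of_le hq) x]
    simp only [P0, Polynomial.eval_finsetSum, Polynomial.eval_mul, Polynomial.eval_C]
    rw [Nat.succ_eq_add_one, ← sum_add_distrib]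
    refine sum_congr rfl fun k _ => ?_
    rw [add_comm x 1, Polynomial.bernoulli_eval_one_add]
    have : (k + 1 : ℚ) ≠ 0 := by positivity
    simp only [Nat.add_sub_cancel]
    push_cast
    field_simp
  refine ⟨P0 + Polynomial.C (a - P0.eval 0), ?_, ?_, ?_, ?_⟩
  · exact (Polynomial.natDegree_add_le _ _).trans (by simp [hdeg])
  · rw [Polynomial.coeff_add, Polynomial.coeff_C_succ, add_zero, hcoeff]
  · simp
  · intro x
    simp only [Polynomial.eval_add, Polynomial.eval_C, hev]
    ring

lemma sign_orbits {V G : Type*} [Fintype V] [Group G] [MulAction G V] (g : G) :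
    ((Equiv.Perm.sign (MulAction.toPerm g : Equiv.Perm V) : ℤ) : ℚ) =
      (-1) ^ Fintype.card V *
      (-1) ^ Nat.card (Quotient (MulAction.orbitRel (Subgroup.zpowers g) V)) := by
  set f : Equiv.Perm V := MulAction.toPerm g with hf
  have hfz : ∀ (k : ℤ) (v : V), (f ^ k) v = g ^ k • v := by
    intro k v
    have : f ^ k = MulAction.toPerm (g ^ k) := by
      have := map_zpow (MulAction.toPermHom G V) g k
      simpa using this.symm
    rw [this]; rfl
  have hrel : ∀ u v : V, (MulAction.orbitRel (Subgroup.zpowers g) V) u v ↔ f.SameCycle u v := by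
    intro u v
    rw [Equiv.Perm.sameCycle_comm]
    rw [MulAction.orbitRel_apply, MulAction.mem_orbit_iff]
    constructor
    · rintro ⟨⟨_, k, rfl⟩, h⟩
      exact ⟨k, by rw [hfz]; exact h⟩
    · rintro ⟨k, h⟩
      exact ⟨⟨g ^ k, k, rfl⟩, by rw [hfz] at h; exact h⟩
  let F : V → Equiv.Perm V ⊕ V := fun v => if f v = v then Sum.inr v else Sum.inl (f.cycleOf v)
  have hF : ∀ u v, f.SameCycle u v ↔ F u = F v := by
    intro u v
    constructor
    · intro h
      by_cases hu : f u = u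
      · have : u = v := by
          have h' : f.SameCycle u v := h
          exact (h'.eq_of_left hu)
        rw [this]
      · have hv : f v ≠ v := fun hv => hu (by
          have := h.eq_of_right hv
          rw [this]; exact hv)
        simp only [F, hu, hv, if_false]
        rw [h.cycleOf_eq]
    · intro h
      by_cases hu : f u = u <;> by_cases hv : f v = v <;> simp only [F, hu, hv, if_true, if_false] at h
      · simp at h; rw [h]
      · simp at h
      · simp at h
      · have h := Sum.inl.inj h
        exact (Equiv.Perm.sameCycle_iff_cycleOf_eq_of_mem_support
          (Equiv.Perm.mem_support.2 hu) (Equiv.Perm.mem_support.2 hv)).2 h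
  have hcard : Nat.card (Quotient (MulAction.orbitRel (Subgroup.zpowers g) V)) =
      (univ.image F).card := by
    rw [← Fintype.card_coe, ← Nat.card_eq_fintype_card]
    refine Nat.card_congr (Equiv.ofBijective (Quotient.lift (fun v => ⟨F v, by simp⟩) ?_) ⟨?_, ?_⟩)
    · intro u v h
      exact Subtype.ext ((hF u v).1 ((hrel u v).1 h))
    · rintro ⟨u⟩ ⟨v⟩ h
      refine Quotient.sound ((hrel u v).2 ((hF u v).2 ?_))
      exact congrArg Subtype.val h
    · rintro ⟨y, hy⟩
      obtain ⟨v, _, rfl⟩ := mem_image.1 hy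
      exact ⟨Quotient.mk _ v, rfl⟩
  have himg : univ.image F = f.cycleFactorsFinset.disjSum f.supportᶜ := by
    ext y
    simp only [mem_image, mem_univ, true_and, mem_disjSum, mem_compl, Equiv.Perm.mem_support, not_not]
    constructor
    · rintro ⟨v, rfl⟩
      by_cases hv : f v = v
      · right; exact ⟨v, hv, by simp [F, hv]⟩
      · left
        exact ⟨f.cycleOf v, Equiv.Perm.cycleOf_mem_cycleFactorsFinset_iff.2
          (Equiv.Perm.mem_support.2 hv), by simp [F, hv]⟩
    · rintro (⟨c, hc, rfl⟩ | ⟨v, hv, rfl⟩)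
      · obtain ⟨v, hv⟩ := Equiv.Perm.IsCycle.nonempty_support (Equiv.Perm.mem_cycleFactorsFinset_iff.1 hc).1
        have h1 := Equiv.Perm.cycle_is_cycleOf hv hc
        have h2 : f v ≠ v := Equiv.Perm.mem_support.1 (Equiv.Perm.mem_cycleFactorsFinset_support_le hc hv)
        exact ⟨v, by simp [F, h2, h1]⟩
      · exact ⟨v, by simp [F, hv]⟩
  rw [hcard, himg, card_disjSum, Equiv.Perm.sign_of_cycleType, Equiv.Perm.sum_cycleType]
  have h1 : Multiset.card f.cycleType = f.cycleFactorsFinset.card := by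
    rw [Equiv.Perm.cycleType_def]; simp
  have h2 : Fintype.card V = f.support.card + f.supportᶜ.card := (card_add_card_compl _).symm
  rw [h1, h2]
  push_cast
  simp only [pow_add]
  have h3 : ((-1 : ℚ) ^ f.supportᶜ.card) * (-1) ^ f.supportᶜ.card = 1 := by
    rw [← pow_add, ← two_mul]; simp
  linear_combination (- (-1 : ℚ) ^ f.support.card * (-1) ^ f.cycleFactorsFinset.card) * h3
lemma hset_empty (A : W → W → Prop) (n : ℕ) : (hset A ∅ n).card = 1 := by
  rw [card_eq_one]
  refine ⟨fun _ => 0, ?_⟩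
  ext c
  rw [mem_hset, mem_singleton, funext_iff]
  simp

lemma wset_empty (A : W → W → Prop) (n : ℕ) : (wset A ∅ n).card = 1 := by
  rw [card_eq_one]
  refine ⟨(fun _ => 0, fun _ _ => False), ?_⟩
  ext ⟨c, σ⟩
  rw [mem_wset, mem_singleton]
  simp only [Prod.mk.injEq]
  constructor
  · rintro ⟨⟨h1, h2⟩, h3, _⟩
    refine ⟨funext fun w => h2 w (by simp), ?_⟩
    funext u v
    simp only [eq_iff_iff, iff_false]
    intro h
    exact absurd (h3 u v h).1 (by simp)
  · rintro ⟨rfl, rfl⟩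
    simp

lemma hset_zero (A : W → W → Prop) {T : Finset W} (hT : T.Nonempty) : (hset A T 0).card = 0 := by
  obtain ⟨w, hw⟩ := hT
  rw [card_eq_zero, eq_empty_iff_forall_notMem]
  intro c hc
  exact absurd ((mem_hset.1 hc).1.1 w hw) (by simp)

lemma wset_zero (A : W → W → Prop) {T : Finset W} (hT : T.Nonempty) : (wset A T 0).card = 0 := by
  obtain ⟨w, hw⟩ := hT
  rw [card_eq_zero, eq_empty_iff_forall_notMem]
  intro c hc
  exact absurd ((mem_wset.1 hc).1.1 w hw) (by simp)

lemma poly_exists (A : W → W → Prop) (hA : ∀ u v, A u v → A v u) (T : Finset W) :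
    ∃ p : Polynomial ℚ, p.natDegree ≤ T.card ∧ ((∀ u, ¬ A u u) → p.coeff T.card = 1) ∧
      (∀ n : ℕ, p.eval (n : ℚ) = (hset A T n).card) ∧
      (∀ n : ℕ, p.eval (-(n : ℚ)) = (-1) ^ T.card * (wset A T n).card) := by
  induction T using Finset.strongInduction with
  | H T ih =>
  rcases T.eq_empty_or_nonempty with rfl | hT
  · refine ⟨1, by simp, by simp, ?_, ?_⟩
    · intro n; simp [hset_empty]
    · intro n; simp [wset_empty]
  choose! p hp using ih
  have hlt : ∀ S ∈ (ind A T).erase ∅, T \ S ⊂ T := by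
    intro S hS
    obtain ⟨h1, h2⟩ := mem_erase.1 hS
    exact sdiff_ssubset (mem_ind.1 h2).1 (nonempty_iff_ne_empty.2 h1)
  have hemp : ∅ ∈ ind A T := mem_ind.2 ⟨empty_subset _, by simp⟩
  obtain ⟨d, hd⟩ : ∃ d, T.card = d + 1 := ⟨T.card - 1, by have := hT.card_pos; omega⟩
  set q : Polynomial ℚ := ∑ S ∈ (ind A T).erase ∅, p (T \ S) with hq
  have hqdeg : q.natDegree ≤ d := by
    refine Polynomial.natDegree_sum_le_of_forall_le _ _ fun S hS => ?_
    have h1 := (hp _ (hlt S hS)).1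
    have h2 := card_lt_card (hlt S hS)
    omega
  obtain ⟨P, hP1, hP2, hP3, hP4⟩ := antidiff q d hqdeg 0
  refine ⟨P, hd ▸ hP1, ?_, ?_, ?_⟩
  · intro hloop
    have hc : q.coeff d = d + 1 := by
      have h0 : ∀ S ∈ (ind A T).erase ∅, (p (T \ S)).coeff d = if S.card = 1 then 1 else 0 := by
        intro S hS
        obtain ⟨hS1, hS2⟩ := mem_erase.1 hS
        have hc := card_sdiff_add_card_eq_card (mem_ind.1 hS2).1
        have hpos := (nonempty_iff_ne_empty.2 hS1).card_pos
        split_ifs with h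
        · have := (hp _ (hlt S hS)).2.1 hloop
          rwa [show (T \ S).card = d by omega] at this
        · apply Polynomial.coeff_eq_zero_of_natDegree_lt
          have h1 := (hp _ (hlt S hS)).1
          omega
      rw [hq, Polynomial.finsetSum_coeff, sum_congr rfl h0, sum_boole]
      have : ((ind A T).erase ∅).filter (fun S => S.card = 1) = T.powersetCard 1 := by
        ext S
        rw [mem_filter, mem_erase, mem_ind, mem_powersetCard]
        constructor
        · rintro ⟨⟨_, h, _⟩, h'⟩; exact ⟨h, h'⟩
        · rintro ⟨h, h'⟩
          obtain ⟨v, rfl⟩ := card_eq_one.1 h'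
          refine ⟨⟨by simp, h, ?_⟩, h'⟩
          simpa using hloop v
      rw [this, card_powersetCard, hd]
      simp
    rw [hc] at hP2
    have : (d + 1 : ℚ) ≠ 0 := by positivity
    rw [hd]
    exact mul_right_cancel₀ this (by rw [hP2, one_mul])
  · intro n
    induction n with
    | zero => simp [hset_zero A hT, hP3]
    | succ n ihn =>
      rw [hset_succ, ← add_sum_erase _ _ hemp, sdiff_empty]
      push_cast
      rw [hP4, ihn, hq, Polynomial.eval_finsetSum]
      congr 1
      exact sum_congr rfl fun S hS => (hp _ (hlt S hS)).2.2.1 n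
  · intro n
    induction n with
    | zero => simp [wset_zero A hT, hP3]
    | succ n ihn =>
      have h1 := wset_succ A hA T n
      rw [← add_sum_erase _ _ hemp, sdiff_empty] at h1
      have h2 := hP4 (-((n + 1 : ℕ) : ℚ))
      rw [show (-((n + 1 : ℕ) : ℚ)) + 1 = -(n : ℚ) by push_cast; ring, ihn, hq,
        Polynomial.eval_finsetSum, sum_congr rfl fun S hS => (hp _ (hlt S hS)).2.2.2 (n + 1), h1] at h2
      linarith

section action

set_option linter.unusedSectionVars false

variable {V G : Type*} [Fintype V] [Group G] [Fintype G] [MulAction G V]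

lemma orbit_inv {β : Type*} (g : G) (f : V → β) (h : ∀ x, f (g⁻¹ • x) = f x) (u v : V)
    (hr : (MulAction.orbitRel (Subgroup.zpowers g) V) u v) : f u = f v := by
  let H : Subgroup G :=
    { carrier := {k | ∀ x, f (k • x) = f x}
      one_mem' := fun x => by simp
      mul_mem' := fun {a b} ha hb x => by rw [mul_smul, ha, hb]
      inv_mem' := fun {a} ha x => by
        have := ha (a⁻¹ • x)
        rw [smul_inv_smul] at this
        exact this.symm }
  have hg : g ∈ H := by
    have : g⁻¹ ∈ H := h
    simpa using H.inv_mem this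
  have hle : Subgroup.zpowers g ≤ H := by
    rw [Subgroup.zpowers_le]; exact hg
  rw [MulAction.orbitRel_apply, MulAction.mem_orbit_iff] at hr
  obtain ⟨⟨k, hk⟩, rfl⟩ := hr
  exact hle hk v

lemma mk_smul (g : G) (v : V) :
    (Quotient.mk (MulAction.orbitRel (Subgroup.zpowers g) V) (g⁻¹ • v)) =
      Quotient.mk (MulAction.orbitRel (Subgroup.zpowers g) V) v := by
  apply Quotient.sound
  change (MulAction.orbitRel (Subgroup.zpowers g) V) _ _
  rw [MulAction.orbitRel_apply, MulAction.mem_orbit_iff]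
  exact ⟨⟨g⁻¹, (Subgroup.zpowers g).inv_mem (Subgroup.mem_zpowers g)⟩, rfl⟩

/-- orbits of `g` -/
abbrev QV (V : Type*) {G : Type*} [Group G] [MulAction G V] (g : G) : Type _ :=
  Quotient (MulAction.orbitRel (Subgroup.zpowers g) V)

/-- quotient adjacency -/
def QA (Γ : SimpleGraph V) (g : G) (a b : QV V g) : Prop :=
  ∃ u v : V, Quotient.mk _ u = a ∧ Quotient.mk _ v = b ∧ Γ.Adj u v

lemma QA_symm (Γ : SimpleGraph V) (g : G) (a b : QV V g) (h : QA Γ g a b) : QA Γ g b a := by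
  obtain ⟨u, v, hu, hv, h⟩ := h
  exact ⟨v, u, hv, hu, h.symm⟩

lemma card_fixed_col (Γ : SimpleGraph V) (g : G) (n : ℕ) :
    Nat.card {c : V → Fin n // (∀ u v : V, Γ.Adj u v → c u ≠ c v) ∧ ∀ x : V, c (g⁻¹ • x) = c x} =
      (hset (QA Γ g) univ n).card := by
  rw [← Fintype.card_coe, ← Nat.card_eq_fintype_card]
  symm
  refine Nat.card_congr (Equiv.ofBijective (fun c => ⟨fun v => ⟨c.1 (Quotient.mk _ v),
    (mem_hset.1 c.2).1.1 _ (mem_univ _)⟩, ?_, ?_⟩) ⟨?_, ?_⟩)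
  · intro u v huv h
    exact (mem_hset.1 c.2).2 _ (mem_univ _) _ (mem_univ _) ⟨u, v, rfl, rfl, huv⟩ (congrArg Fin.val h)
  · intro x
    apply Fin.ext
    dsimp only
    rw [mk_smul]
  · rintro ⟨c, hc⟩ ⟨c', hc'⟩ h
    apply Subtype.ext
    funext a
    induction a using Quotient.inductionOn with
    | h v =>
    have := congrFun (congrArg Subtype.val h) v
    exact congrArg Fin.val this
  · rintro ⟨c, h1, h2⟩
    refine ⟨⟨Quotient.lift (fun v => (c v : ℕ)) ?_, ?_⟩, ?_⟩
    · intro u v huv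
      exact congrArg Fin.val (orbit_inv g c h2 u v huv)
    · refine mem_hset.2 ⟨⟨?_, by simp⟩, ?_⟩
      · rintro ⟨v⟩ _
        exact (c v).2
      · rintro a _ b _ ⟨u, v, rfl, rfl, huv⟩ h
        exact h1 u v huv (Fin.ext h)
    · rfl

/-- compatible pairs, with orientations given as relations -/
def PR (Γ : SimpleGraph V) {n : ℕ} (x : (V → Fin n) × (V → V → Prop)) : Prop :=
  (∀ u v, x.2 u v → Γ.Adj u v ∧ x.1 u ≤ x.1 v) ∧ (∀ u v, Γ.Adj u v → x.2 u v ∨ x.2 v u) ∧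
    ∀ v, ¬ Relation.TransGen x.2 v v

lemma rank_exists (ρ : V → V → Prop) (h : ∀ v, ¬ Relation.TransGen ρ v v) (g : G)
    (hg : ∀ u v, ρ (g⁻¹ • u) (g⁻¹ • v) ↔ ρ u v) :
    ∃ r : V → ℕ, (∀ u v, ρ u v → r u < r v) ∧ ∀ v, r (g⁻¹ • v) = r v := by
  refine ⟨fun v => (univ.filter (fun u => Relation.TransGen ρ u v)).card, ?_, ?_⟩
  · intro u v huv
    apply card_lt_card
    rw [ssubset_iff_of_subset]
    · exact ⟨u, by simpa using Relation.TransGen.single huv, by simpa using h u⟩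
    · intro w hw
      simp only [mem_filter, mem_univ, true_and] at hw ⊢
      exact hw.tail huv
  · intro v
    have key : ∀ a b, Relation.TransGen ρ a b → Relation.TransGen ρ (g⁻¹ • a) (g⁻¹ • b) :=
      fun a b hab => Relation.TransGen.lift (fun x => g⁻¹ • x) (fun a b h => (hg a b).2 h) _ _ hab
    have key2 : ∀ a b, Relation.TransGen ρ a b → Relation.TransGen ρ (g • a) (g • b) :=
      fun a b hab => Relation.TransGen.lift (fun x => g • x)
        (fun a b h => (hg (g • a) (g • b)).1 (by simpa using h)) _ _ hab
    refine card_bij' (fun a _ => g • a) (fun a _ => g⁻¹ • a) ?_ ?_ ?_ ?_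
    · intro a ha
      simp only [mem_filter, mem_univ, true_and] at ha ⊢
      simpa using key2 _ _ ha
    · intro a ha
      simp only [mem_filter, mem_univ, true_and] at ha ⊢
      exact key _ _ ha
    · intro a _; simp
    · intro a _; simp

lemma trans_rank {ρ : V → V → Prop} {r : V → ℕ} (h : ∀ u v, ρ u v → r u < r v) {a b : V}
    (hab : Relation.TransGen ρ a b) : r a < r b := by
  induction hab with
  | single h' => exact h _ _ h'
  | tail _ h' ih => exact ih.trans (h _ _ h')

lemma card_fixed_pair (Γ : SimpleGraph V)
    (hact : ∀ (g : G) (u v : V), Γ.Adj u v → Γ.Adj (g • u) (g • v)) (g : G) (n : ℕ) :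
    Nat.card {x : (V → Fin n) × (V → V → Prop) // PR Γ x ∧ (∀ v : V, x.1 (g⁻¹ • v) = x.1 v) ∧
        ∀ u v, x.2 (g⁻¹ • u) (g⁻¹ • v) ↔ x.2 u v} =
      (wset (QA Γ g) univ n).card := by
  have hfin : Fintype.card (wset (QA Γ g) univ n) = (wset (QA Γ g) univ n).card := Fintype.card_coe _
  rw [← hfin, ← Nat.card_eq_fintype_card]
  symm
  refine Nat.card_congr (Equiv.ofBijective (fun x => ⟨(fun v => ⟨x.1.1 (Quotient.mk _ v),
    (mem_wset.1 x.2).1.1 _ (mem_univ _)⟩,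
    fun u v => Γ.Adj u v ∧ x.1.2 (Quotient.mk _ u) (Quotient.mk _ v)), ?_, ?_, ?_⟩) ⟨?_, ?_⟩)
  · obtain ⟨_, h1, h2, r, h3⟩ := mem_wset.1 x.2
    refine ⟨?_, ?_, ?_⟩
    · rintro u v ⟨huv, h⟩
      exact ⟨huv, (h1 _ _ h).2.2.2⟩
    · intro u v huv
      rcases h2 _ (mem_univ (Quotient.mk _ u)) _ (mem_univ (Quotient.mk _ v)) ⟨u, v, rfl, rfl, huv⟩ with h | h
      · exact Or.inl ⟨huv, h⟩
      · exact Or.inr ⟨huv.symm, h⟩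
    · intro v hv
      have := trans_rank (r := fun v => r (Quotient.mk _ v)) (fun u v h => h3 _ _ h.2) hv
      exact lt_irrefl _ this
  · intro v
    apply Fin.ext
    dsimp only
    rw [mk_smul]
  · intro u v
    dsimp only
    rw [mk_smul, mk_smul]
    refine and_congr_left fun _ => ⟨fun h => ?_, fun h => hact _ _ _ h⟩
    simpa using hact g _ _ h
  · rintro ⟨⟨c, σ⟩, hx⟩ ⟨⟨c', σ'⟩, hx'⟩ h
    have h0 := congrArg Subtype.val h
    dsimp only at h0
    obtain ⟨hc, hs⟩ := Prod.mk.inj h0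
    have h1 := (mem_wset.1 hx).2.1
    have h1' := (mem_wset.1 hx').2.1
    apply Subtype.ext
    refine Prod.ext ?_ ?_
    · funext a
      induction a using Quotient.inductionOn with
      | h v =>
      exact congrArg Fin.val (congrFun hc v)
    · funext a b
      apply propext
      constructor
      · intro hab
        obtain ⟨u, v, rfl, rfl, huv⟩ := (h1 _ _ hab).2.2.1
        exact (iff_of_eq (congrFun (congrFun hs u) v)).1 ⟨huv, hab⟩ |>.2
      · intro hab
        obtain ⟨u, v, rfl, rfl, huv⟩ := (h1' _ _ hab).2.2.1
        exact (iff_of_eq (congrFun (congrFun hs u) v)).2 ⟨huv, hab⟩ |>.2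
  · rintro ⟨⟨c, ρ⟩, ⟨h1, h2, h3⟩, h4, h5⟩
    dsimp only at h1 h2 h3 h4 h5
    obtain ⟨r, hr1, hr2⟩ := rank_exists ρ h3 g h5
    refine ⟨⟨(Quotient.lift (fun v => (c v : ℕ)) ?_,
      fun a b => ∃ u v, Quotient.mk _ u = a ∧ Quotient.mk _ v = b ∧ ρ u v), ?_⟩, ?_⟩
    · intro u v huv
      exact congrArg Fin.val (orbit_inv g c h4 u v huv)
    · refine mem_wset.2 ⟨⟨?_, by simp⟩, ?_, ?_, Quotient.lift r (orbit_inv g r hr2), ?_⟩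
      · rintro ⟨v⟩ _
        exact (c v).2
      · rintro a b ⟨u, v, rfl, rfl, huv⟩
        exact ⟨mem_univ _, mem_univ _, ⟨u, v, rfl, rfl, (h1 u v huv).1⟩, (h1 u v huv).2⟩
      · rintro a _ b _ ⟨u, v, rfl, rfl, huv⟩
        rcases h2 u v huv with h | h
        · exact Or.inl ⟨u, v, rfl, rfl, h⟩
        · exact Or.inr ⟨v, u, rfl, rfl, h⟩
      · rintro a b ⟨u, v, rfl, rfl, huv⟩
        exact hr1 u v huv
    · apply Subtype.ext
      refine Prod.ext rfl ?_
      funext u v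
      apply propext
      constructor
      · rintro ⟨huv, u', v', hu, hv, h⟩
        rcases h2 u v huv with h' | h'
        · exact h'
        · have e1 := orbit_inv g r hr2 _ _ (Quotient.exact hu)
          have e2 := orbit_inv g r hr2 _ _ (Quotient.exact hv)
          have e3 := hr1 _ _ h
          have e4 := hr1 _ _ h'
          omega
      · intro h
        exact ⟨(h1 u v h).1, u, v, rfl, rfl, h⟩

lemma burnside {X : Type*} [Finite X] (act : G → X → X) (h1 : ∀ x, act 1 x = x)
    (hm : ∀ g h x, act (g * h) x = act g (act h x)) (r : X → X → Prop)
    (hr : ∀ x y, r x y ↔ ∃ g, y = act g x) :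
    Nat.card (Quot r) * Fintype.card G = ∑ g : G, Nat.card {x : X // act g x = x} := by
  have := Fintype.ofFinite X
  let _ : MulAction G X :=
    { smul := act
      one_smul := h1
      mul_smul := hm }
  have key := MulAction.sum_card_fixedBy_eq_card_orbits_mul_card_group G X
  have e : Nat.card (Quot r) = Nat.card (Quotient (MulAction.orbitRel G X)) := by
    refine Nat.card_congr ?_
    refine (Quot.congrRight (r' := fun x y => MulAction.orbitRel G X x y) ?_)
    intro x y
    rw [hr]
    constructor
    · rintro ⟨g, rfl⟩
      refine (MulAction.orbitRel G X).symm ?_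
      exact ⟨g, rfl⟩
    · intro h
      obtain ⟨g, hg⟩ := (MulAction.orbitRel G X).symm h
      exact ⟨g, hg.symm⟩
  rw [e, Nat.card_eq_fintype_card, ← key]
  refine sum_congr rfl fun g _ => ?_
  rw [← Nat.card_eq_fintype_card]
  rfl

lemma even_count (Γ : SimpleGraph V)
    (hact : ∀ (g : G) (u v : V), Γ.Adj u v → Γ.Adj (g • u) (g • v)) (n : ℕ) :
    (Nat.card (Quot (fun c c' : {c : V → Fin n //
              (∀ u v : V, Γ.Adj u v → c u ≠ c v) ∧
              ∀ g : G, (∀ x : V, c (g⁻¹ • x) = c x) →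
                Equiv.Perm.sign (MulAction.toPerm g : Equiv.Perm V) = 1} =>
            ∃ g : G, ∀ x : V, c'.1 x = c.1 (g⁻¹ • x))) : ℚ) * Fintype.card G =
      ∑ g : G, ((Equiv.Perm.sign (MulAction.toPerm g : Equiv.Perm V) : ℤ) : ℚ) *
        (hset (QA Γ g) univ n).card := by
  have hB := burnside (G := G) (X := {c : V → Fin n //
              (∀ u v : V, Γ.Adj u v → c u ≠ c v) ∧
              ∀ g : G, (∀ x : V, c (g⁻¹ • x) = c x) →
                Equiv.Perm.sign (MulAction.toPerm g : Equiv.Perm V) = 1})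
    (fun g c => ⟨fun x => c.1 (g⁻¹ • x), fun u v h => c.2.1 _ _ (hact _ _ _ h), ?_⟩) ?_ ?_
    (fun c c' => ∃ g : G, ∀ x : V, c'.1 x = c.1 (g⁻¹ • x)) ?_
  rotate_left
  · intro h hh
    have h1 := c.2.2 (g⁻¹ * h * g) (fun x => by
      have := hh (g • x)
      simpa [mul_smul] using this)
    have h2 : (MulAction.toPerm (g⁻¹ * h * g) : Equiv.Perm V) =
        (MulAction.toPerm g)⁻¹ * MulAction.toPerm h * MulAction.toPerm g := by
      ext x
      simp [mul_smul]
    rw [h2] at h1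
    rw [map_mul, map_mul, map_inv, mul_right_comm, inv_mul_cancel, one_mul] at h1
    exact h1
  · intro x
    apply Subtype.ext
    simp
  · intro g h x
    apply Subtype.ext
    simp [mul_smul]
  · intro x y
    refine exists_congr fun g => ?_
    rw [Subtype.ext_iff, funext_iff]
  have hB' := congrArg (Nat.cast (R := ℚ)) hB
  push_cast at hB'
  rw [hB']
  have hL : ∀ g : G, (Nat.card {x : {c : V → Fin n //
              (∀ u v : V, Γ.Adj u v → c u ≠ c v) ∧
              ∀ g : G, (∀ x : V, c (g⁻¹ • x) = c x) →
                Equiv.Perm.sign (MulAction.toPerm g : Equiv.Perm V) = 1} //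
                (fun y : V => x.1 (g⁻¹ • y)) = x.1} : ℚ) =
      ∑ c : V → Fin n, if (∀ u v : V, Γ.Adj u v → c u ≠ c v) then
        (if (∀ x : V, c (g⁻¹ • x) = c x) ∧ (∀ g : G, (∀ x : V, c (g⁻¹ • x) = c x) →
                Equiv.Perm.sign (MulAction.toPerm g : Equiv.Perm V) = 1) then 1 else 0) else 0 := by
    intro g
    have : ∀ c : V → Fin n, (if (∀ u v : V, Γ.Adj u v → c u ≠ c v) then
        (if (∀ x : V, c (g⁻¹ • x) = c x) ∧ (∀ g : G, (∀ x : V, c (g⁻¹ • x) = c x) →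
                Equiv.Perm.sign (MulAction.toPerm g : Equiv.Perm V) = 1) then 1 else 0) else 0) =
        if ((∀ u v : V, Γ.Adj u v → c u ≠ c v) ∧ (∀ g : G, (∀ x : V, c (g⁻¹ • x) = c x) →
                Equiv.Perm.sign (MulAction.toPerm g : Equiv.Perm V) = 1)) ∧
                (fun x : V => c (g⁻¹ • x)) = c then (1 : ℚ) else 0 := by
      intro c
      have hfe : (fun x : V => c (g⁻¹ • x)) = c ↔ ∀ x : V, c (g⁻¹ • x) = c x := funext_iff
      split_ifs <;> tauto
    rw [sum_congr rfl fun c _ => this c, sum_boole, ← Fintype.card_subtype,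
      ← Nat.card_eq_fintype_card]
    congr 1
    exact Nat.card_congr (Equiv.subtypeSubtypeEquivSubtypeInter
      (fun c : V → Fin n => (∀ u v : V, Γ.Adj u v → c u ≠ c v) ∧
        (∀ g : G, (∀ x : V, c (g⁻¹ • x) = c x) →
                Equiv.Perm.sign (MulAction.toPerm g : Equiv.Perm V) = 1))
      (fun c => (fun x : V => c (g⁻¹ • x)) = c))
  have hR : ∀ g : G, ((hset (QA Γ g) univ n).card : ℚ) =
      ∑ c : V → Fin n, if (∀ u v : V, Γ.Adj u v → c u ≠ c v) then
        (if (∀ x : V, c (g⁻¹ • x) = c x) then 1 else 0) else 0 := by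
    intro g
    simp only [← ite_and]
    rw [← card_fixed_col, sum_boole, ← Fintype.card_subtype, Nat.card_eq_fintype_card]
  refine (sum_congr rfl fun g _ => Eq.trans (congrArg Nat.cast (Nat.card_congr
    (Equiv.subtypeEquivRight fun x => Subtype.ext_iff))) (hL g)).trans ?_
  simp only [hR, mul_sum]
  rw [sum_comm, sum_comm (s := (univ : Finset G))]
  refine sum_congr rfl fun c _ => ?_
  by_cases hc : ∀ u v : V, Γ.Adj u v → c u ≠ c v
  swap
  · simp only [if_neg hc, mul_zero]
  simp only [if_pos hc]
  by_cases he : ∀ g : G, (∀ x : V, c (g⁻¹ • x) = c x) →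
                Equiv.Perm.sign (MulAction.toPerm g : Equiv.Perm V) = 1
  · refine sum_congr rfl fun g _ => ?_
    by_cases hg : ∀ x : V, c (g⁻¹ • x) = c x
    · rw [if_pos ⟨hg, he⟩, if_pos hg, he g hg]; simp
    · rw [if_neg (fun h => hg h.1), if_neg hg]; simp
  · rw [sum_eq_zero fun g _ => if_neg fun h => he h.2]
    push Not at he
    obtain ⟨k, hk, hks⟩ := he
    have hks : Equiv.Perm.sign (MulAction.toPerm k : Equiv.Perm V) = -1 :=
      (Int.units_eq_one_or _).resolve_left hks
    have hk' : ∀ x : V, c (k • x) = c x := fun x => by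
      have := hk (k • x)
      rw [inv_smul_smul] at this
      exact this.symm
    have hneg : ∑ g : G, ((Equiv.Perm.sign (MulAction.toPerm g : Equiv.Perm V) : ℤ) : ℚ) *
          (if (∀ x : V, c (g⁻¹ • x) = c x) then 1 else 0) =
        ∑ g : G, -(((Equiv.Perm.sign (MulAction.toPerm g : Equiv.Perm V) : ℤ) : ℚ) *
          (if (∀ x : V, c (g⁻¹ • x) = c x) then 1 else 0)) := by
      refine Fintype.sum_equiv (Equiv.mulLeft k) _ _ fun g => ?_
      have e1 : (MulAction.toPerm (k * g) : Equiv.Perm V) =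
          MulAction.toPerm k * MulAction.toPerm g := by
        ext x
        simp [mul_smul]
      have e2 : (∀ x : V, c ((k * g)⁻¹ • x) = c x) ↔ (∀ x : V, c (g⁻¹ • x) = c x) := by
        constructor
        · intro h x
          have := h (k • x)
          rw [mul_inv_rev, mul_smul, inv_smul_smul, hk'] at this
          exact this
        · intro h x
          rw [mul_inv_rev, mul_smul, h, hk]
      simp only [Equiv.coe_mulLeft, e1, e2, Equiv.Perm.sign_mul, hks]
      split_ifs <;> simp
    rw [sum_neg_distrib] at hneg
    linarith



lemma dirAdj_iff {Γ : SimpleGraph V} (σ : GraphOri Γ) {u v : V} (h : Γ.Adj u v) :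
    dirAdj Γ σ u v ↔ σ.1 ⟨s(u, v), Γ.mem_edgeSet.mpr h⟩ = v :=
  ⟨fun ⟨_, h'⟩ => h', fun h' => ⟨h, h'⟩⟩

lemma ori_swap {Γ : SimpleGraph V} (σ : GraphOri Γ) {u v : V} (h : Γ.Adj u v) :
    σ.1 ⟨s(v, u), Γ.mem_edgeSet.mpr h.symm⟩ = σ.1 ⟨s(u, v), Γ.mem_edgeSet.mpr h⟩ := by
  exact congrArg σ.1 (Subtype.ext Sym2.eq_swap)

lemma dirAdj_iff' {Γ : SimpleGraph V} (σ : GraphOri Γ) {u v : V} (h : Γ.Adj u v) :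
    dirAdj Γ σ v u ↔ σ.1 ⟨s(u, v), Γ.mem_edgeSet.mpr h⟩ = u := by
  rw [dirAdj_iff σ h.symm, ori_swap σ h]

lemma ori_cases {Γ : SimpleGraph V} (σ : GraphOri Γ) {u v : V} (h : Γ.Adj u v) :
    σ.1 ⟨s(u, v), Γ.mem_edgeSet.mpr h⟩ = u ∨ σ.1 ⟨s(u, v), Γ.mem_edgeSet.mpr h⟩ = v :=
  Sym2.mem_iff.1 (σ.2 ⟨s(u, v), Γ.mem_edgeSet.mpr h⟩)

lemma dirAdj_asymm {Γ : SimpleGraph V} (σ : GraphOri Γ) {u v : V} (h : dirAdj Γ σ u v) :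
    ¬ dirAdj Γ σ v u := by
  obtain ⟨hadj, h1⟩ := h
  rw [dirAdj_iff' σ hadj, h1]
  exact hadj.ne'

lemma dirAdj_inj {Γ : SimpleGraph V} {σ σ' : GraphOri Γ} (h : dirAdj Γ σ = dirAdj Γ σ') :
    σ = σ' := by
  apply Subtype.ext
  funext e
  obtain ⟨e, he⟩ := e
  induction e using Sym2.inductionOn with
  | hf u v =>
  have hadj : Γ.Adj u v := he
  rcases ori_cases σ hadj with h1 | h1
  · have := (dirAdj_iff' σ hadj).2 h1
    rw [h] at this
    exact h1.trans ((dirAdj_iff' σ' hadj).1 this).symm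
  · have := (dirAdj_iff σ hadj).2 h1
    rw [h] at this
    exact h1.trans ((dirAdj_iff σ' hadj).1 this).symm

lemma smulEq_iff (Γ : SimpleGraph V)
    (hact : ∀ (g : G) (u v : V), Γ.Adj u v → Γ.Adj (g • u) (g • v)) (g : G) (σ σ' : GraphOri Γ) :
    oriSMulEq Γ hact g σ σ' ↔ ∀ u v, dirAdj Γ σ' u v ↔ dirAdj Γ σ (g⁻¹ • u) (g⁻¹ • v) := by
  constructor
  · intro h u v
    by_cases hadj : Γ.Adj u v
    · rw [dirAdj_iff σ' hadj, dirAdj_iff σ (hact g⁻¹ u v hadj), h u v hadj, smul_eq_iff_eq_inv_smul]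
    · constructor
      · rintro ⟨h', _⟩
        exact absurd h' hadj
      · rintro ⟨h', _⟩
        exact absurd (by simpa using hact g _ _ h') hadj
  · intro h u v hadj
    rcases ori_cases σ' hadj with h1 | h1
    · have := (h v u).1 ((dirAdj_iff' σ' hadj).2 h1)
      rw [dirAdj_iff' σ (hact g⁻¹ u v hadj)] at this
      rw [h1, this, smul_inv_smul]
    · have := (h u v).1 ((dirAdj_iff σ' hadj).2 h1)
      rw [dirAdj_iff σ (hact g⁻¹ u v hadj)] at this
      rw [h1, this, smul_inv_smul]

/-- from orientations to relations -/
def toRel (Γ : SimpleGraph V) (n : ℕ) (x : {pr : (V → Fin n) × GraphOri Γ //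
      oriAcyclic Γ pr.2 ∧ weakCompat Γ pr.1 pr.2}) :
    {x : (V → Fin n) × (V → V → Prop) // PR Γ x} :=
  ⟨(x.1.1, dirAdj Γ x.1.2), by
    obtain ⟨⟨c, σ⟩, h1, h2⟩ := x
    refine ⟨?_, ?_, h1⟩
    · intro u v huv
      refine ⟨huv.1, ?_⟩
      by_contra hlt
      have h3 := h2 v u huv.1.symm (not_le.1 hlt)
      exact dirAdj_asymm σ huv ⟨huv.1.symm, h3⟩
    · intro u v hadj
      rcases ori_cases σ hadj with h | h
      · exact Or.inr ((dirAdj_iff' σ hadj).2 h)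
      · exact Or.inl ((dirAdj_iff σ hadj).2 h)⟩

lemma toRel_bij (Γ : SimpleGraph V) (n : ℕ) : Function.Bijective (toRel Γ n) := by
  constructor
  · rintro ⟨⟨c, σ⟩, hx⟩ ⟨⟨c', σ'⟩, hx'⟩ h
    have h0 := congrArg Subtype.val h
    obtain ⟨h1, h2⟩ := Prod.mk.inj h0
    exact Subtype.ext (Prod.ext h1 (dirAdj_inj h2))
  · rintro ⟨⟨c, ρ⟩, h1, h2, h3⟩
    dsimp only at h1 h2 h3
    have hex : ∀ e : Γ.edgeSet, ∃ v, ∃ u, (e : Sym2 V) = s(u, v) ∧ ρ u v := by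
      rintro ⟨e, he⟩
      induction e using Sym2.inductionOn with
      | hf u v =>
      rcases h2 u v he with h | h
      · exact ⟨v, u, rfl, h⟩
      · exact ⟨u, v, Sym2.eq_swap, h⟩
    choose f k hk hρ using hex
    let σ : GraphOri Γ := ⟨f, fun e => by
      have hmem : f e ∈ s(k e, f e) := Sym2.mem_mk_right _ _
      rwa [← hk e] at hmem⟩
    have hdir : dirAdj Γ σ = ρ := by
      funext u v
      apply propext
      constructor
      · rintro ⟨hadj, h⟩
        have h4 := hk ⟨s(u, v), Γ.mem_edgeSet.mpr hadj⟩
        have h5 := hρ ⟨s(u, v), Γ.mem_edgeSet.mpr hadj⟩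
        change f _ = v at h
        rw [h] at h4 h5
        have : u = k ⟨s(u, v), Γ.mem_edgeSet.mpr hadj⟩ := Sym2.congr_left.1 h4
        rwa [← this] at h5
      · intro h
        have hadj := (h1 u v h).1
        refine ⟨hadj, ?_⟩
        change f _ = v
        have h4 := hk ⟨s(u, v), Γ.mem_edgeSet.mpr hadj⟩
        have h5 := hρ ⟨s(u, v), Γ.mem_edgeSet.mpr hadj⟩
        rcases Sym2.eq_iff.1 h4 with ⟨_, h6⟩ | ⟨h6, h7⟩
        · exact h6.symm
        · rw [← h6, ← h7] at h5
          exact absurd ((Relation.TransGen.single h).tail h5) (h3 u)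
    refine ⟨⟨(c, σ), ?_, ?_⟩, ?_⟩
    · intro v
      dsimp only
      rw [hdir]
      exact h3 v
    · intro u v hadj hlt
      dsimp only at hlt ⊢
      rw [← dirAdj_iff σ hadj, hdir]
      rcases h2 u v hadj with h | h
      · exact h
      · exact absurd (h1 v u h).2 (not_le.2 hlt)
    · apply Subtype.ext
      exact Prod.ext rfl hdir

lemma pair_count (Γ : SimpleGraph V)
    (hact : ∀ (g : G) (u v : V), Γ.Adj u v → Γ.Adj (g • u) (g • v)) (n : ℕ) :
    Nat.card (Quot (fun x y : {pr : (V → Fin n) × GraphOri Γ //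
              oriAcyclic Γ pr.2 ∧ weakCompat Γ pr.1 pr.2} =>
            ∃ g : G, (∀ v : V, y.1.1 v = x.1.1 (g⁻¹ • v)) ∧
              oriSMulEq Γ hact g x.1.2 y.1.2)) * Fintype.card G =
      ∑ g : G, (wset (QA Γ g) univ n).card := by
  have hB := burnside (G := G) (X := {x : (V → Fin n) × (V → V → Prop) // PR Γ x})
    (fun g x => ⟨(fun v => x.1.1 (g⁻¹ • v), fun u v => x.1.2 (g⁻¹ • u) (g⁻¹ • v)), ?_⟩) ?_ ?_
    (fun x y => ∃ g : G, (∀ v : V, y.1.1 v = x.1.1 (g⁻¹ • v)) ∧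
      ∀ u v, y.1.2 u v ↔ x.1.2 (g⁻¹ • u) (g⁻¹ • v)) ?_
  rotate_left
  · obtain ⟨h1, h2, h3⟩ := x.2
    refine ⟨?_, ?_, ?_⟩
    · intro u v h
      obtain ⟨h4, h5⟩ := h1 _ _ h
      exact ⟨by simpa using hact g _ _ h4, h5⟩
    · intro u v h
      exact h2 _ _ (hact g⁻¹ _ _ h)
    · intro v hv
      exact h3 (g⁻¹ • v) (Relation.TransGen.lift (fun x => g⁻¹ • x) (fun _ _ h => h) _ _ hv)
  · intro x
    apply Subtype.ext
    simp
  · intro g h x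
    apply Subtype.ext
    simp [mul_smul]
  · intro x y
    refine exists_congr fun g => ?_
    rw [Subtype.ext_iff, Prod.ext_iff]
    simp only [funext_iff, eq_iff_iff]
  have e : Nat.card (Quot (fun x y : {pr : (V → Fin n) × GraphOri Γ //
              oriAcyclic Γ pr.2 ∧ weakCompat Γ pr.1 pr.2} =>
            ∃ g : G, (∀ v : V, y.1.1 v = x.1.1 (g⁻¹ • v)) ∧
              oriSMulEq Γ hact g x.1.2 y.1.2)) =
      Nat.card (Quot (fun x y : {x : (V → Fin n) × (V → V → Prop) // PR Γ x} =>
        ∃ g : G, (∀ v : V, y.1.1 v = x.1.1 (g⁻¹ • v)) ∧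
      ∀ u v, y.1.2 u v ↔ x.1.2 (g⁻¹ • u) (g⁻¹ • v))) := by
    refine Nat.card_congr (Quot.congr (Equiv.ofBijective _ (toRel_bij Γ n)) ?_)
    intro x y
    refine exists_congr fun g => and_congr Iff.rfl ?_
    exact smulEq_iff Γ hact g _ _
  rw [e, hB]
  refine sum_congr rfl fun g _ => ?_
  rw [← card_fixed_pair Γ hact g n]
  refine Nat.card_congr (Equiv.trans (Equiv.subtypeEquivRight (q := fun x =>
      (∀ v : V, x.1.1 (g⁻¹ • v) = x.1.1 v) ∧ ∀ u v, x.1.2 (g⁻¹ • u) (g⁻¹ • v) ↔ x.1.2 u v) ?_)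
    (Equiv.subtypeSubtypeEquivSubtypeInter (PR Γ) (fun x : (V → Fin n) × (V → V → Prop) =>
      (∀ v : V, x.1 (g⁻¹ • v) = x.1 v) ∧ ∀ u v, x.2 (g⁻¹ • u) (g⁻¹ • v) ↔ x.2 u v)))
  intro x
  rw [Subtype.ext_iff, Prod.ext_iff]
  simp only [funext_iff, eq_iff_iff]

theorem main (Γ : SimpleGraph V)
    (hact : ∀ (g : G) (u v : V), Γ.Adj u v → Γ.Adj (g • u) (g • v)) :
    ∃ p : Polynomial ℚ, p.degree = (Fintype.card V : WithBot ℕ) ∧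
      (∀ n : ℕ,
        p.eval (n : ℚ) =
          Nat.card (Quot (fun c c' : {c : V → Fin n //
              (∀ u v : V, Γ.Adj u v → c u ≠ c v) ∧
              ∀ g : G, (∀ x : V, c (g⁻¹ • x) = c x) →
                Equiv.Perm.sign (MulAction.toPerm g : Equiv.Perm V) = 1} =>
            ∃ g : G, ∀ x : V, c'.1 x = c.1 (g⁻¹ • x)))) ∧
      (∀ n : ℕ,
        p.eval (-(n : ℚ)) = (-1) ^ (Fintype.card V) *
          Nat.card (Quot (fun x y : {pr : (V → Fin n) × GraphOri Γ //
              oriAcyclic Γ pr.2 ∧ weakCompat Γ pr.1 pr.2} =>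
            ∃ g : G, (∀ v : V, y.1.1 v = x.1.1 (g⁻¹ • v)) ∧
              oriSMulEq Γ hact g x.1.2 y.1.2))) := by
  choose P hP1 hP2 hP3 hP4 using fun g : G => poly_exists (QA Γ g) (QA_symm Γ g) univ
  have hG : (Fintype.card G : ℚ) ≠ 0 := by
    have := Fintype.card_pos (α := G)
    positivity
  have hle : ∀ g : G, (univ : Finset (QV V g)).card ≤ Fintype.card V := fun g =>
    Fintype.card_le_of_surjective _ Quotient.mk_surjective
  let s : G → ℚ := fun g => ((Equiv.Perm.sign (MulAction.toPerm g : Equiv.Perm V) : ℤ) : ℚ)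
  have hcoef : ∀ g : G, s g * (P g).coeff (Fintype.card V) =
      if (∀ v : V, g⁻¹ • v = v) then 1 else 0 := by
    intro g
    split_ifs with hg
    · have hinj : Function.Injective (Quotient.mk (MulAction.orbitRel (Subgroup.zpowers g) V)) :=
        fun u v h => orbit_inv g id hg u v (Quotient.exact h)
      have hcard : (univ : Finset (QV V g)).card = Fintype.card V :=
        le_antisymm (hle g) (Fintype.card_le_of_injective _ hinj)
      have h1 := hP2 g (by
        rintro a ⟨u, v, hu, hv, huv⟩
        exact huv.ne (hinj (hu.trans hv.symm)))
      rw [hcard] at h1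
      have h2 : (MulAction.toPerm g : Equiv.Perm V) = 1 := by
        ext v
        have := hg (g • v)
        rw [inv_smul_smul] at this
        exact this.symm
      simp [s, h1, h2]
    · rw [Polynomial.coeff_eq_zero_of_natDegree_lt, mul_zero]
      refine (hP1 g).trans_lt (lt_of_le_of_ne (hle g) fun heq => hg fun v => ?_)
      have hb : Function.Bijective (Quotient.mk (MulAction.orbitRel (Subgroup.zpowers g) V)) :=
        (Fintype.bijective_iff_surjective_and_card _).2 ⟨Quotient.mk_surjective, heq.symm⟩
      exact hb.1 (mk_smul g v)
  refine ⟨Polynomial.C (Fintype.card G : ℚ)⁻¹ * ∑ g : G, Polynomial.C (s g) * P g, ?_, ?_, ?_⟩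
  · apply le_antisymm
    · refine Polynomial.degree_le_of_natDegree_le ((Polynomial.natDegree_C_mul_le _ _).trans
        (Polynomial.natDegree_sum_le_of_forall_le _ _ fun g _ =>
          (Polynomial.natDegree_C_mul_le _ _).trans ((hP1 g).trans (hle g))))
    · apply Polynomial.le_degree_of_ne_zero
      rw [Polynomial.coeff_C_mul, Polynomial.finsetSum_coeff]
      simp only [Polynomial.coeff_C_mul, hcoef]
      rw [sum_boole]
      refine mul_ne_zero (inv_ne_zero hG) ?_
      rw [Nat.cast_ne_zero]
      exact (card_pos.2 ⟨1, by simp⟩).ne'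
  · intro n
    have h := even_count Γ hact n
    rw [Polynomial.eval_mul, Polynomial.eval_C, inv_mul_eq_iff_eq_mul₀ hG, mul_comm, h,
      Polynomial.eval_finsetSum]
    refine sum_congr rfl fun g _ => ?_
    rw [Polynomial.eval_mul, Polynomial.eval_C, hP3]
  · intro n
    have h := congrArg (Nat.cast (R := ℚ)) (pair_count Γ hact n)
    push_cast at h
    rw [Polynomial.eval_mul, Polynomial.eval_C, inv_mul_eq_iff_eq_mul₀ hG, mul_left_comm,
      mul_comm (Fintype.card G : ℚ), h, Polynomial.eval_finsetSum, mul_sum]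
    refine sum_congr rfl fun g _ => ?_
    rw [Polynomial.eval_mul, Polynomial.eval_C, hP4]
    simp only [s]
    rw [sign_orbits, Nat.card_eq_fintype_card, card_univ]
    have h3 : ((-1 : ℚ) ^ Fintype.card (QV V g)) * (-1) ^ Fintype.card (QV V g) = 1 := by
      rw [← pow_add, ← two_mul]; simp
    linear_combination ((-1 : ℚ) ^ Fintype.card V * (wset (QA Γ g) univ n).card) * h3

end action

end
end Recip

/-- Let `Γ` be a finite simple graph and `G` a finite group acting on
`Γ` by automorphisms.  Then the function `χ⁺_{Γ,G}(n) = |Col_{n,+}(Γ)/G|` counting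
`G`-orbits of even proper `n`-colorings agrees for all `n ≥ 1` with a polynomial of
degree `|V|`, and this polynomial satisfies
`χ⁺_{Γ,G}(-n) = (-1)^{|V|} · |Σ_n(Γ)/G|` for all integers `n ≥ 1`, where `Σ_n(Γ)/G` is
the set of `G`-orbits of weakly compatible pairs of an `n`-coloring and an acyclic
orientation.  (A proper coloring is even if every `g ∈ G` stabilizing it has sign `+1`
as a permutation of `V`; `G` acts on pairs by `g • (c,σ) = (g • c, g • σ)`.) -/
theorem stmt_18 {V G : Type*} [Fintype V] [DecidableEq V] [Group G] [Fintype G]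
    [MulAction G V] (Γ : SimpleGraph V)
    (hact : ∀ (g : G) (u v : V), Γ.Adj u v → Γ.Adj (g • u) (g • v)) :
    ∃ p : Polynomial ℚ, p.degree = (Fintype.card V : WithBot ℕ) ∧
      (∀ n : ℕ, 1 ≤ n →
        p.eval (n : ℚ) =
          Nat.card (Quot (fun c c' : {c : V → Fin n //
              (∀ u v : V, Γ.Adj u v → c u ≠ c v) ∧
              ∀ g : G, (∀ x : V, c (g⁻¹ • x) = c x) →
                Equiv.Perm.sign (MulAction.toPerm g : Equiv.Perm V) = 1} =>
            ∃ g : G, ∀ x : V, c'.1 x = c.1 (g⁻¹ • x)))) ∧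
      (∀ n : ℕ, 1 ≤ n →
        p.eval (-(n : ℚ)) = (-1) ^ (Fintype.card V) *
          Nat.card (Quot (fun x y : {pr : (V → Fin n) × GraphOri Γ //
              oriAcyclic Γ pr.2 ∧ weakCompat Γ pr.1 pr.2} =>
            ∃ g : G, (∀ v : V, y.1.1 v = x.1.1 (g⁻¹ • v)) ∧
              oriSMulEq Γ hact g x.1.2 y.1.2))) := by
  obtain ⟨p, h1, h2, h3⟩ := Recip.main Γ hact
  refine ⟨p, h1, fun n _ => ?_, fun n _ => h3 n⟩
  convert h2 n
end
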